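/- arXiv:1506.01775 — 4 statements merged into one kernel-verified Lean document; each statement's English description precedes it below -/
import Mathlib

section
/- There is a constant c > 0 such that for all integers s ≥ 0 and t ≥ 3 with s ≤ 10⁻⁵·t/ln t, for every graph H on s + t vertices and every set S of s vertices of H, f(H) ≤ c·t·√(ln(d(H − S) + 2)), where d(H − S) is the average degree of H − S. -/
/-!
A graph of large average degree has a small, very dense minor, and branch sets of a model of `H`
can be chosen in the dense minor one after another.

*Dense minor.* Mader's argument (`exists_minor_triangles`) takes a minor that is minimal subject to
`|E| ≥ kn - b`; each of its edges lies in at least `k` triangles, so the neighbourhood of a vertex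
of minimum degree induces a graph of minimum degree at least `k` on fewer than about `2k` vertices.
Applying this twice, the second time with `b` of order `k²` inside the first neighbourhood, gives
`exists_dense_minor`: a minor on at most `7r` vertices with minimum degree at least `4r`, where `r`
is proportional to the average degree. In it any two vertices have at least `r` common neighbours,
and both properties needed below survive the removal of any set `W` of at most `r / 2` vertices.

*Embedding.* Suppose some branch sets are already built, on the vertex set `W`. For a vertex of
`S`, some `M`-tuple outside `W`, with `2 ^ M` larger than the order of the graph, dominates every
vertex (`exists_dominating_tuple`), so its branch set is adjacent to all others. For a vertex `a`
outside `S`, a random `m`-tuple outside `W` leaves on average a proportion at most `2 ^ (-m)` of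
the vertices undominated. If earlier branch sets leave at most a proportion `2 * 2 ^ (-m)`
undominated, then the tuple misses the neighbourhood of each of them with probability at most
`(4 / 2 ^ m) ^ m`. A choice within twice both means (`exists_tuple`) keeps the induction going.
Common neighbours then connect the tuple and repair the few missing adjacencies
(`exists_star_closure`).

*Counting.* With `m` of order `√(ln (d + 2))` one has `(4 / 2 ^ m) ^ m * d ≤ 1`, so at most `2t`
repairs occur in total; with `M = O(m + ln t)` and `s = O(t / ln t)` the branch sets of `S` use
`O(tm)` vertices. Everything fits into `r / 2` vertices for `r = 16tm`.
-/

open SimpleGraph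

/-- `H` is a minor of `G`: there is a family of nonempty, connected,
pairwise disjoint branch sets in `G`, one for each vertex of `H`, with an
edge of `G` between the branch sets of any two adjacent vertices of `H`. -/
def HasMinor {V : Type*} {W : Type*} (G : SimpleGraph V) (H : SimpleGraph W) : Prop :=
  ∃ φ : W → Set V,
    (∀ w, (φ w).Nonempty) ∧
    (∀ w, (G.induce (φ w)).Connected) ∧
    (Pairwise fun w w' => Disjoint (φ w) (φ w')) ∧
    (∀ ⦃w w'⦄, H.Adj w w' → ∃ u ∈ φ w, ∃ v ∈ φ w', G.Adj u v)

/-- The average degree `2|E(G)|/|V(G)|` of a graph. -/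
noncomputable def avgDeg {V : Type*} (G : SimpleGraph V) : ℝ :=
  2 * Nat.card G.edgeSet / Nat.card V

/-- `f(H)`: the infimum of all `D` such that every (finite) graph with average
degree at least `D` contains `H` as a minor. -/
noncomputable def minorF {W : Type*} (H : SimpleGraph W) : ℝ :=
  sInf {D : ℝ | ∀ (V : Type) [Fintype V], ∀ G : SimpleGraph V, D ≤ avgDeg G → HasMinor G H}

/-! ### Minors and edge counts -/

section Prelim
open Classical Finset

/-- The neighbourhood of `v` as a finset, with decidability supplied classically. -/
noncomputable def nb {V : Type*} [Fintype V] (G : SimpleGraph V) (v : V) : Finset V :=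
  univ.filter fun w => G.Adj v w

/-- The ordered pairs of adjacent vertices; there are `2|E(G)|` of them. -/
noncomputable def adjPairs {V : Type*} [Fintype V] (G : SimpleGraph V) : Finset (V × V) :=
  univ.filter fun p => G.Adj p.1 p.2

/-- The vertices with no neighbour in `B`, that is, those not dominated by `B`. -/
noncomputable def undom {V : Type*} [Fintype V] (G : SimpleGraph V) (B : Finset V) : Finset V :=
  univ.filter fun v => ∀ b ∈ B, ¬ G.Adj v b

theorem mem_nb {V : Type*} [Fintype V] {G : SimpleGraph V} {v w : V} :
    w ∈ nb G v ↔ G.Adj v w := by simp [nb]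

theorem mem_adjPairs {V : Type*} [Fintype V] {G : SimpleGraph V} {p : V × V} :
    p ∈ adjPairs G ↔ G.Adj p.1 p.2 := by simp [adjPairs]

theorem card_adjPairs_eq_sum {V : Type*} [Fintype V] (G : SimpleGraph V) :
    #(adjPairs G) = ∑ v, #(nb G v) := by
  simp only [adjPairs, nb, Finset.card_filter]
  rw [← Finset.univ_product_univ, Finset.sum_product]

theorem card_adjPairs_eq_edges {V : Type*} [Fintype V] (G : SimpleGraph V) :
    #(adjPairs G) = 2 * Nat.card G.edgeSet := by
  rw [card_adjPairs_eq_sum, Nat.card_eq_fintype_card, ← SimpleGraph.edgeFinset_card,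
    ← G.sum_degrees_eq_twice_card_edges]
  refine Finset.sum_congr rfl fun v _ => ?_
  rw [← SimpleGraph.card_neighborFinset_eq_degree]
  congr 1
  ext w
  simp [nb]

theorem card_nb_lt {V : Type*} [Fintype V] (G : SimpleGraph V) (v : V) :
    #(nb G v) < Fintype.card V := by
  rw [← Finset.card_univ]
  refine Finset.card_lt_card ?_
  rw [Finset.ssubset_univ_iff]
  intro h
  have : v ∈ nb G v := by rw [h]; simp
  exact G.loopless.irrefl v (mem_nb.1 this)

theorem connected_induce_of_reachable {V : Type*} {G : SimpleGraph V} {A : Set V} (a : V)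
    (ha : a ∈ A) (h : ∀ x (hx : x ∈ A), (G.induce A).Reachable ⟨a, ha⟩ ⟨x, hx⟩) :
    (G.induce A).Connected := by
  have : Nonempty A := ⟨⟨a, ha⟩⟩
  exact ⟨fun x y => (h x.1 x.2).symm.trans (h y.1 y.2)⟩

theorem HasMinor.trans {V V' W : Type*} {G : SimpleGraph V} {G' : SimpleGraph V'}
    {H : SimpleGraph W} (h₁ : HasMinor G G') (h₂ : HasMinor G' H) : HasMinor G H := by
  obtain ⟨φ, ne₁, con₁, dis₁, adj₁⟩ := h₁
  obtain ⟨ψ, ne₂, con₂, dis₂, adj₂⟩ := h₂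
  refine ⟨fun w => ⋃ x ∈ ψ w, φ x, ?_, ?_, ?_, ?_⟩
  · intro w
    obtain ⟨x, hx⟩ := ne₂ w
    obtain ⟨y, hy⟩ := ne₁ x
    exact ⟨y, Set.mem_biUnion hx hy⟩
  · intro w
    have sub : ∀ x ∈ ψ w, φ x ⊆ ⋃ x ∈ ψ w, φ x := fun x hx =>
      Set.subset_biUnion_of_mem (u := φ) hx
    have inner : ∀ x (hx : x ∈ ψ w), ∀ y (hy : y ∈ φ x) z (hz : z ∈ φ x),
        (G.induce (⋃ x ∈ ψ w, φ x)).Reachable ⟨y, sub x hx hy⟩ ⟨z, sub x hx hz⟩ := by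
      intro x hx y hy z hz
      have := (con₁ x).preconnected ⟨y, hy⟩ ⟨z, hz⟩
      exact this.map (SimpleGraph.induceHomOfLE G (sub x hx)).toHom
    have outer : ∀ (p q : ψ w), (G'.induce (ψ w)).Walk p q →
        ∀ y (hy : y ∈ φ p) z (hz : z ∈ φ q),
        (G.induce (⋃ x ∈ ψ w, φ x)).Reachable ⟨y, sub p p.2 hy⟩ ⟨z, sub q q.2 hz⟩ := by
      intro p q wk
      induction wk with
      | nil => intro y hy z hz; exact inner _ (Subtype.property _) y hy z hz
      | @cons p p' q hadj _ ih =>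
        intro y hy z hz
        obtain ⟨a, ha, b, hb, hab⟩ := adj₁ (show G'.Adj p p' from hadj)
        have e : (G.induce (⋃ x ∈ ψ w, φ x)).Adj ⟨a, sub p p.2 ha⟩ ⟨b, sub p' p'.2 hb⟩ := hab
        exact ((inner p p.2 y hy a ha).trans e.reachable).trans (ih b hb z hz)
    obtain ⟨x, hx⟩ := ne₂ w
    obtain ⟨y, hy⟩ := ne₁ x
    refine connected_induce_of_reachable y (sub x hx hy) ?_
    intro z hz
    obtain ⟨x', hx', hz'⟩ := Set.mem_iUnion₂.1 hz
    obtain ⟨wk⟩ := (con₂ w).preconnected ⟨x, hx⟩ ⟨x', hx'⟩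
    exact outer _ _ wk y hy z hz'
  · intro w w' hww
    simp only [Set.disjoint_iUnion_left, Set.disjoint_iUnion_right]
    intro x hx y hy
    refine dis₁ ?_
    rintro rfl
    exact Set.disjoint_left.1 (dis₂ hww) hy hx
  · intro w w' hadj
    obtain ⟨x, hx, y, hy, hxy⟩ := adj₂ hadj
    obtain ⟨a, ha, b, hb, hab⟩ := adj₁ hxy
    exact ⟨a, Set.mem_biUnion hx ha, b, Set.mem_biUnion hy hb, hab⟩

/-- An injective graph homomorphism exhibits its source as a minor, with singleton branch sets. -/
theorem HasMinor.of_injective {V W : Type*} {G : SimpleGraph V} {H : SimpleGraph W} (f : W → V)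
    (hf : Function.Injective f) (hadj : ∀ ⦃x y⦄, H.Adj x y → G.Adj (f x) (f y)) :
    HasMinor G H := by
  refine ⟨fun w => {f w}, fun w => Set.singleton_nonempty _, ?_, ?_, ?_⟩
  · intro w
    refine connected_induce_of_reachable (f w) rfl ?_
    intro x hx
    obtain rfl : x = f w := hx
    exact SimpleGraph.Reachable.refl _
  · intro w w' h
    simpa using fun e => h (hf e)
  · intro w w' h
    exact ⟨f w, rfl, f w', rfl, hadj h⟩

/-- The graph obtained from `G` by merging `v` into `u`: the vertex `v` disappears and `u`
inherits its neighbours. If `u` and `v` are adjacent this is edge contraction. -/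
def contr {V : Type*} (G : SimpleGraph V) (u v : V) : SimpleGraph {x : V // x ≠ v} where
  Adj x y := x ≠ y ∧ (G.Adj x y ∨ (x.1 = u ∧ G.Adj v y) ∨ (y.1 = u ∧ G.Adj v x))
  symm := ⟨by
    rintro x y ⟨h, h'⟩
    refine ⟨h.symm, ?_⟩
    rcases h' with h' | h' | h'
    · exact Or.inl h'.symm
    · exact Or.inr (Or.inr h')
    · exact Or.inr (Or.inl h')⟩
  loopless := ⟨fun x h => h.1 rfl⟩

theorem hasMinor_contr {V : Type*} {G : SimpleGraph V} {u v : V} (huv : G.Adj u v) :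
    HasMinor G (contr G u v) := by
  refine ⟨fun x => if x.1 = u then {u, v} else {x.1}, ?_, ?_, ?_, ?_⟩
  · intro x
    dsimp only
    split_ifs <;> simp
  · intro x
    dsimp only
    by_cases h : x.1 = u
    · rw [if_pos h]
      refine connected_induce_of_reachable u (by simp) ?_
      intro y hy
      rcases hy with rfl | hy
      · exact SimpleGraph.Reachable.refl _
      · obtain rfl : y = v := hy
        exact SimpleGraph.Adj.reachable (G := G.induce _) huv
    · rw [if_neg h]
      refine connected_induce_of_reachable x.1 rfl ?_
      intro y hy
      obtain rfl : y = x.1 := hy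
      exact SimpleGraph.Reachable.refl _
  · intro x y hxy
    have h1 := x.2
    have h2 := y.2
    have h3 : x.1 ≠ y.1 := fun e => hxy (Subtype.ext e)
    rw [Set.disjoint_left]
    intro z hz hz'
    dsimp only at hz hz'
    split_ifs at hz hz' <;> simp at hz hz' <;> grind
  · rintro x y ⟨hne, h | ⟨h, h'⟩ | ⟨h, h'⟩⟩
    · refine ⟨x, ?_, y, ?_, h⟩
      · dsimp only; split_ifs with hh
        · simp [hh]
        · simp
      · dsimp only; split_ifs with hh
        · simp [hh]
        · simp
    · refine ⟨v, by simp [h], y, ?_, h'⟩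
      dsimp only; split_ifs with hh
      · simp [hh]
      · simp
    · refine ⟨x, ?_, v, by simp [h], h'.symm⟩
      dsimp only; split_ifs with hh
      · simp [hh]
      · simp

/-- Contracting an edge destroys that edge, and one further edge for each common neighbour. -/
theorem card_adjPairs_contr {V : Type*} [Fintype V] {G : SimpleGraph V} {u v : V}
    (huv : G.Adj u v) :
    #(adjPairs G) ≤ #(adjPairs (contr G u v)) + 2 + 2 * #(nb G u ∩ nb G v) := by
  have hne : u ≠ v := huv.ne
  set C := nb G u ∩ nb G v with hC
  set bad : Finset (V × V) := {(u, v), (v, u)} ∪ (C.image (fun w => (v, w)) ∪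
    C.image (fun w => (w, v))) with hbad
  have hbadc : #bad ≤ 2 + 2 * #C := by
    have h1 := Finset.card_union_le ({(u, v), (v, u)} : Finset (V × V))
      (C.image (fun w => (v, w)) ∪ C.image (fun w => (w, v)))
    have h2 := Finset.card_union_le (C.image (fun w => (v, w))) (C.image (fun w => (w, v)))
    have h3 : #(C.image (fun w => (v, w))) ≤ #C := Finset.card_image_le
    have h4 : #(C.image (fun w => (w, v))) ≤ #C := Finset.card_image_le
    have h5 : #({(u, v), (v, u)} : Finset (V × V)) ≤ 2 := Finset.card_le_two
    rw [hbad]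
    omega
  let f : V → {x : V // x ≠ v} := fun x => if h : x = v then ⟨u, hne⟩ else ⟨x, h⟩
  have hf : ∀ x, (f x).1 = if x = v then u else x := by
    intro x; simp only [f]; split_ifs <;> rfl
  have key : #(adjPairs G \ bad) ≤ #(adjPairs (contr G u v)) := by
    refine Finset.card_le_card_of_injOn (fun p => (f p.1, f p.2)) ?_ ?_
    · rintro ⟨x, y⟩ hp
      simp only [hbad, hC, coe_sdiff, Set.mem_sdiff, mem_coe, mem_adjPairs, mem_union, mem_insert,
        mem_singleton, mem_image, mem_inter, mem_nb, Prod.mk.injEq, not_or] at hp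
      obtain ⟨hadj, ⟨h1, h2⟩, -⟩ := hp
      have hxy := hadj.ne
      simp only [mem_coe, mem_adjPairs, contr, ne_eq, Subtype.ext_iff, hf]
      have := hadj.symm
      split_ifs <;> grind
    · rintro ⟨x, y⟩ hp ⟨x', y'⟩ hp' he
      simp only [hbad, hC, coe_sdiff, Set.mem_sdiff, mem_coe, mem_adjPairs, mem_union, mem_insert,
        mem_singleton, mem_image, mem_inter, mem_nb, Prod.mk.injEq, not_or, not_exists,
        not_and] at hp hp'
      simp only [Prod.mk.injEq, Subtype.ext_iff, hf] at he
      obtain ⟨hadj, ⟨h1, h2⟩, h3, h4⟩ := hp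
      obtain ⟨hadj', ⟨h1', h2'⟩, h3', h4'⟩ := hp'
      have a1 := hadj.symm
      have a2 := hadj'.symm
      have a3 := hadj.ne
      have a4 := hadj'.ne
      have s3 := fun w hw hv => h3 w ⟨hw, hv⟩
      have s4 := fun w hw hv => h4 w ⟨hw, hv⟩
      have s3' := fun w hw hv => h3' w ⟨hw, hv⟩
      have s4' := fun w hw hv => h4' w ⟨hw, hv⟩
      obtain ⟨e1, e2⟩ := he
      simp only [Prod.mk.injEq]
      clear hbad hbadc hf h3 h4 h3' h4'
      split_ifs at e1 e2 <;> grind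
  have := Finset.le_card_sdiff bad (adjPairs G)
  omega
end Prelim

/-! ### Mader's argument: a dense minor -/

section Mader
open Classical Finset

theorem card_adjPairs_le {V : Type*} [Fintype V] (G : SimpleGraph V) :
    #(adjPairs G) + Fintype.card V ≤ Fintype.card V * Fintype.card V := by
  rw [card_adjPairs_eq_sum]
  have : ∑ v, (#(nb G v) + 1) ≤ ∑ _v : V, Fintype.card V :=
    Finset.sum_le_sum fun v _ => card_nb_lt G v
  simpa [Finset.sum_add_distrib] using this

theorem card_subtype_ne {V : Type*} [Fintype V] (v : V) :
    Fintype.card {x : V // x ≠ v} = Fintype.card V - 1 := by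
  rw [Fintype.card_subtype_compl, Fintype.card_subtype_eq]

theorem card_adjPairs_delete_isolated {V : Type*} [Fintype V] {G : SimpleGraph V} {v : V}
    (hv : ∀ u, ¬ G.Adj v u) :
    #(adjPairs G) ≤ #(adjPairs (G.comap (Subtype.val : {x : V // x ≠ v} → V))) := by
  refine Finset.card_le_card_of_surjOn (fun p => (p.1.1, p.2.1)) ?_
  rintro ⟨x, y⟩ hp
  have hp : G.Adj x y := mem_adjPairs.1 hp
  have hx : x ≠ v := by rintro rfl; exact hv _ hp
  have hy : y ≠ v := by rintro rfl; exact hv _ hp.symm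
  refine ⟨(⟨x, hx⟩, ⟨y, hy⟩), ?_, rfl⟩
  simpa [mem_adjPairs] using hp

theorem card_adjPairs_deleteEdge {V : Type*} [Fintype V] (G : SimpleGraph V) (u v : V) :
    #(adjPairs G) ≤ #(adjPairs (G.deleteEdges {s(u, v)})) + 2 := by
  have h : adjPairs G ⊆ adjPairs (G.deleteEdges {s(u, v)}) ∪ {(u, v), (v, u)} := by
    rintro ⟨x, y⟩ hp
    have hp : G.Adj x y := mem_adjPairs.1 hp
    simp only [mem_union, mem_adjPairs, SimpleGraph.deleteEdges_adj, mem_insert, mem_singleton,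
      Set.mem_singleton_iff, Sym2.eq_iff, Prod.mk.injEq]
    tauto
  have h1 := Finset.card_le_card h
  have h2 := Finset.card_union_le (adjPairs (G.deleteEdges {s(u, v)})) {(u, v), (v, u)}
  have h5 : #({(u, v), (v, u)} : Finset (V × V)) ≤ 2 := Finset.card_le_two
  omega

theorem card_adjPairs_deleteEdge_lt {V : Type*} [Fintype V] {G : SimpleGraph V} {u v : V}
    (h : G.Adj u v) : #(adjPairs (G.deleteEdges {s(u, v)})) < #(adjPairs G) := by
  refine Finset.card_lt_card ⟨?_, ?_⟩
  · intro p hp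
    rw [mem_adjPairs] at hp ⊢
    exact (SimpleGraph.deleteEdges_adj.1 hp).1
  · intro hs
    have := mem_adjPairs.1 (hs (mem_adjPairs.2 (show G.Adj (u, v).1 (u, v).2 from h)))
    simp [SimpleGraph.deleteEdges_adj] at this

/-- Mader's argument: among the minors of `G` with at least `k` vertices that satisfy
`2|E| ≥ 2kn - 2b`, a minimal one has no isolated vertex and each of its edges lies in at least `k`
triangles. The hypothesis `2b ≤ k²` rules out such a graph on exactly `k` vertices, so that the
minimal one still has a vertex to spare. -/
theorem exists_minor_triangles (k b : ℕ) (hk : 1 ≤ k) (hb : 2 * b ≤ k * k) :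
    ∀ (N : ℕ) (V : Type) [Fintype V] (G : SimpleGraph V),
      Fintype.card V ^ 3 + #(adjPairs G) ≤ N → k ≤ Fintype.card V →
      2 * k * Fintype.card V ≤ #(adjPairs G) + 2 * b →
      ∃ (V' : Type) (_ : Fintype V') (G' : SimpleGraph V'), HasMinor G G' ∧
        k ≤ Fintype.card V' ∧ Fintype.card V' ≤ Fintype.card V ∧
        #(adjPairs G') + 2 * b ≤ 2 * k * Fintype.card V' + 1 ∧
        (∀ u, ∃ v, G'.Adj u v) ∧ ∀ u v, G'.Adj u v → k ≤ #(nb G' u ∩ nb G' v) := by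
  intro N
  induction N with
  | zero =>
    intro V _ G h1 h2
    have : 0 < Fintype.card V ^ 3 := pow_pos (by omega) 3
    omega
  | succ N ih =>
    intro V _ G hN hkV hE
    have hlt : k < Fintype.card V := by
      refine lt_of_le_of_ne hkV fun he => ?_
      have := card_adjPairs_le G
      rw [← he] at this hE
      nlinarith
    -- A step to a smaller graph of the class on `V₁` suffices.
    have step : ∀ (V₁ : Type) [Fintype V₁] (G₁ : SimpleGraph V₁), HasMinor G G₁ →
        Fintype.card V₁ ^ 3 + #(adjPairs G₁) ≤ N → k ≤ Fintype.card V₁ →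
        Fintype.card V₁ ≤ Fintype.card V →
        2 * k * Fintype.card V₁ ≤ #(adjPairs G₁) + 2 * b →
        ∃ (V' : Type) (_ : Fintype V') (G' : SimpleGraph V'), HasMinor G G' ∧
          k ≤ Fintype.card V' ∧ Fintype.card V' ≤ Fintype.card V ∧
          #(adjPairs G') + 2 * b ≤ 2 * k * Fintype.card V' + 1 ∧
          (∀ u, ∃ v, G'.Adj u v) ∧ ∀ u v, G'.Adj u v → k ≤ #(nb G' u ∩ nb G' v) := by
      intro V₁ _ G₁ hm h1 h2 h3 h4
      obtain ⟨V', i, G', a1, a2, a3, a4⟩ := ih V₁ G₁ h1 h2 h4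
      exact ⟨V', i, G', hm.trans a1, a2, a3.trans h3, a4⟩
    have hmul : 2 * k * Fintype.card V = 2 * k * (Fintype.card V - 1) + 2 * k := by
      obtain ⟨n, hn⟩ : ∃ n, Fintype.card V = n + 1 := ⟨Fintype.card V - 1, by omega⟩
      rw [hn, Nat.add_sub_cancel]; ring
    -- Losing a vertex lowers the cube by more than the number of edges can grow.
    have meas : ∀ (v : V) (G₁ : SimpleGraph {x : V // x ≠ v}),
        Fintype.card {x : V // x ≠ v} ^ 3 + #(adjPairs G₁) ≤ N := by
      intro v G₁
      have h1 := card_adjPairs_le G₁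
      rw [card_subtype_ne v] at h1 ⊢
      obtain ⟨n, hn⟩ : ∃ n, Fintype.card V = n + 1 := ⟨Fintype.card V - 1, by omega⟩
      rw [hn, Nat.add_sub_cancel] at h1 ⊢
      rw [hn] at hN
      nlinarith
    by_cases hiso : ∃ v, ∀ u, ¬ G.Adj v u
    · obtain ⟨v, hv⟩ := hiso
      have h1 := card_adjPairs_delete_isolated hv
      have h3 := card_subtype_ne v
      refine step {x : V // x ≠ v} (G.comap Subtype.val)
        (HasMinor.of_injective Subtype.val Subtype.val_injective fun x y h => h) (meas v _) ?_ ?_ ?_ <;>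
        rw [h3] <;> omega
    by_cases hbig : 2 * k * Fintype.card V + 2 ≤ #(adjPairs G) + 2 * b
    · push Not at hiso
      have : 0 < Fintype.card V := by omega
      obtain ⟨v⟩ := Fintype.card_pos_iff.1 this
      obtain ⟨u, hu⟩ := hiso v
      have h1 := card_adjPairs_deleteEdge G v u
      have h2 := card_adjPairs_deleteEdge_lt hu
      refine step V (G.deleteEdges {s(v, u)}) (HasMinor.of_injective id Function.injective_id
        fun x y h => (SimpleGraph.deleteEdges_adj.1 h).1) ?_ hkV le_rfl ?_ <;> omega
    by_cases htri : ∃ u v, G.Adj u v ∧ #(nb G u ∩ nb G v) < k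
    · obtain ⟨u, v, huv, hc⟩ := htri
      have h1 := card_adjPairs_contr huv
      have h3 := card_subtype_ne v
      refine step {x : V // x ≠ v} (contr G u v) (hasMinor_contr huv) (meas v _) ?_ ?_ ?_ <;>
        rw [h3] <;> omega
    push Not at hiso htri
    exact ⟨V, inferInstance, G, HasMinor.of_injective id Function.injective_id fun x y h => h,
      hkV, le_rfl, by omega, hiso, htri⟩

/-- The neighbourhood of a vertex of minimum degree in the graph of `exists_minor_triangles`:
a minor with minimum degree at least `k` and few vertices. The number `n` is the order of the
ambient graph. -/
theorem exists_minor_minDegree (k b : ℕ) (hk : 1 ≤ k) (hb : 2 * b ≤ k * k)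
    (V : Type) [Fintype V] (G : SimpleGraph V) (hkV : k ≤ Fintype.card V)
    (hE : 2 * k * Fintype.card V ≤ #(adjPairs G) + 2 * b) :
    ∃ (V' : Type) (_ : Fintype V') (G' : SimpleGraph V') (n : ℕ), HasMinor G G' ∧
      k ≤ n ∧ n ≤ Fintype.card V ∧ n * Fintype.card V' + 2 * b ≤ 2 * k * n + 1 ∧
      0 < Fintype.card V' ∧ ∀ v, k ≤ #(nb G' v) := by
  obtain ⟨V₁, _, G₁, hm, h1, h2, h3, h4, h5⟩ :=
    exists_minor_triangles k b hk hb _ V G le_rfl hkV hE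
  have hne : (univ : Finset V₁).Nonempty := by
    rw [← Finset.card_pos, Finset.card_univ]; omega
  obtain ⟨v, -, hv⟩ := Finset.exists_min_image univ (fun v => #(nb G₁ v)) hne
  have hc : Fintype.card {x : V₁ // G₁.Adj v x} = #(nb G₁ v) := by
    rw [Fintype.card_subtype]; rfl
  refine ⟨{x : V₁ // G₁.Adj v x}, inferInstance, G₁.comap Subtype.val, Fintype.card V₁,
    hm.trans (HasMinor.of_injective Subtype.val Subtype.val_injective fun x y h => h), h1, h2,
    ?_, ?_, ?_⟩
  · have : ∑ _w : V₁, #(nb G₁ v) ≤ ∑ w, #(nb G₁ w) :=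
      Finset.sum_le_sum fun w hw => hv w hw
    rw [← card_adjPairs_eq_sum, Finset.sum_const, Finset.card_univ, smul_eq_mul] at this
    rw [hc]
    omega
  · obtain ⟨u, hu⟩ := h4 v
    exact Fintype.card_pos_iff.2 ⟨⟨u, hu⟩⟩
  · rintro ⟨u, hu⟩
    refine (h5 v u hu).trans (Finset.card_le_card_of_surjOn Subtype.val ?_)
    intro x hx
    rw [mem_coe, mem_inter, mem_nb, mem_nb] at hx
    exact ⟨⟨x, hx.1⟩, by simpa [mem_nb] using hx.2, rfl⟩

/-- A graph with average degree at least `16r` has a minor on at most `7r` vertices with minimum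
degree at least `4r`. Mader's argument is used twice: it first gives a minor whose minimum degree
is half its order, and with a quadratic saving term `b` it then pushes the ratio above one half. -/
theorem exists_dense_minor (r : ℕ) (hr : 1 ≤ r) (V : Type) [Fintype V] (G : SimpleGraph V)
    (hV : 0 < Fintype.card V) (hE : 16 * r * Fintype.card V ≤ #(adjPairs G)) :
    ∃ (V' : Type) (_ : Fintype V') (G' : SimpleGraph V'), HasMinor G G' ∧
      0 < Fintype.card V' ∧ Fintype.card V' ≤ 7 * r ∧ ∀ v, 4 * r ≤ #(nb G' v) := by
  have h0 := card_adjPairs_le G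
  have h8 : 8 * r ≤ Fintype.card V := by nlinarith
  obtain ⟨V₁, _, G₁, n, hm, h1, h2, h3, h4, h5⟩ :=
    exists_minor_minDegree (8 * r) 0 (by omega) (by omega) V G h8 (by nlinarith)
  have hV₁ : Fintype.card V₁ ≤ 16 * r := by
    by_contra hcon
    push Not at hcon
    nlinarith
  have hE₁ : 8 * r * Fintype.card V₁ ≤ #(adjPairs G₁) := by
    rw [card_adjPairs_eq_sum]
    have : ∑ _v : V₁, 8 * r ≤ ∑ v, #(nb G₁ v) := Finset.sum_le_sum fun v _ => h5 v
    simpa [mul_comm] using this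
  have hl : 8 * r < Fintype.card V₁ := by
    obtain ⟨v⟩ := Fintype.card_pos_iff.1 h4
    exact (h5 v).trans_lt (card_nb_lt G₁ v)
  obtain ⟨V₂, _, G₂, n', hm', h1', h2', h3', h4', h5'⟩ :=
    exists_minor_minDegree (4 * r) (8 * r * r) (by omega) (by nlinarith) V₁ G₁ (by omega)
      (by nlinarith)
  refine ⟨V₂, inferInstance, G₂, hm.trans hm', h4', ?_, h5'⟩
  by_contra hcon
  push Not at hcon
  have e1 : n' ≤ 16 * r := h2'.trans hV₁
  have e2 : n' * (7 * r + 1) ≤ n' * Fintype.card V₂ := Nat.mul_le_mul_left _ hcon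
  have e3 : n' * r ≤ 16 * r * r := Nat.mul_le_mul_right _ e1
  nlinarith
end Mader

/-! ### Random tuples in dense graphs -/

section Dense
open Classical Finset

/-- Two nonnegative quantities with means at most `a` and `b` are simultaneously at most `2a` and
`2b` somewhere. -/
theorem exists_le_two_mul {ι : Type*} (P : Finset ι) (hP : P.Nonempty) (f g : ι → ℝ)
    (hf : ∀ p, 0 ≤ f p) (hg : ∀ p, 0 ≤ g p) (a b : ℝ) (ha : 0 < a)
    (hfa : ∑ p ∈ P, f p ≤ #P * a) (hgb : ∑ p ∈ P, g p ≤ #P * b) :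
    ∃ p ∈ P, f p ≤ 2 * a ∧ g p ≤ 2 * b := by
  have hPc : (0 : ℝ) < #P := by exact_mod_cast hP.card_pos
  have hb : 0 ≤ b := by
    by_contra hb
    push Not at hb
    have : 0 ≤ ∑ p ∈ P, g p := Finset.sum_nonneg fun p _ => hg p
    nlinarith
  rcases hb.eq_or_lt with rfl | hb
  · obtain ⟨p, hp, h⟩ := Finset.exists_le_of_sum_le (s := P) (f := f) (g := fun _ => a) hP
      (by simpa using hfa)
    refine ⟨p, hp, by linarith, ?_⟩
    have := Finset.single_le_sum (fun q _ => hg q) hp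
    simp only [mul_zero] at hgb ⊢
    linarith
  · obtain ⟨p, hp, h⟩ := Finset.exists_le_of_sum_le (s := P)
      (f := fun p => b * f p + a * g p) (g := fun _ => 2 * (a * b)) hP (by
        rw [Finset.sum_add_distrib, ← Finset.mul_sum, ← Finset.mul_sum, Finset.sum_const,
          nsmul_eq_mul]
        nlinarith [mul_le_mul_of_nonneg_left hfa hb.le, mul_le_mul_of_nonneg_left hgb ha.le])
    refine ⟨p, hp, ?_, ?_⟩
    · have := mul_nonneg ha.le (hg p)
      have : b * f p ≤ b * (2 * a) := by linarith
      exact le_of_mul_le_mul_left this hb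
    · have := mul_nonneg hb.le (hf p)
      have : a * g p ≤ a * (2 * b) := by linarith
      exact le_of_mul_le_mul_left this ha

/-- The number of `m`-tuples from `R` all of whose entries lie in `A`. -/
theorem card_tuples_subset {V : Type*} (R A : Finset V) (m : ℕ) :
    #((Fintype.piFinset fun _ : Fin m => R).filter fun p => ∀ i, p i ∈ A) = #(R ∩ A) ^ m := by
  have : ((Fintype.piFinset fun _ : Fin m => R).filter fun p => ∀ i, p i ∈ A)
      = Fintype.piFinset fun _ : Fin m => R ∩ A := by
    ext p
    simp [Fintype.mem_piFinset, forall_and]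
  rw [this, Fintype.card_piFinset]
  simp

/-- Counting, over all `m`-tuples from `R`, the indices `j` for which the tuple lies in `A j`. -/
theorem sum_card_tuples {V ι : Type*} (R : Finset V) (J : Finset ι) (A : ι → Finset V)
    (m : ℕ) (x : ℝ) (hA : ∀ j ∈ J, (#(R ∩ A j) : ℝ) ≤ x * #R) :
    ∑ p ∈ Fintype.piFinset fun _ : Fin m => R, (#(J.filter fun j => ∀ i, p i ∈ A j) : ℝ)
      ≤ #(Fintype.piFinset fun _ : Fin m => R) * (#J * x ^ m) := by
  have h1 : ∑ p ∈ Fintype.piFinset fun _ : Fin m => R, #(J.filter fun j => ∀ i, p i ∈ A j)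
      = ∑ j ∈ J, #(R ∩ A j) ^ m := by
    simp_rw [← card_tuples_subset]
    exact Finset.sum_card_bipartiteAbove_eq_sum_card_bipartiteBelow
      (r := fun (p : Fin m → V) j => ∀ i, p i ∈ A j)
  rw [← Nat.cast_sum, h1, Nat.cast_sum, Fintype.card_piFinset]
  simp only [prod_const, card_univ, Fintype.card_fin, Nat.cast_pow]
  calc ∑ j ∈ J, (#(R ∩ A j) : ℝ) ^ m ≤ ∑ _j ∈ J, (x * #R) ^ m :=
        Finset.sum_le_sum fun j hj => pow_le_pow_left₀ (by positivity) (hA j hj) m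
    _ = (#R : ℝ) ^ m * (#J * x ^ m) := by
        rw [Finset.sum_const, nsmul_eq_mul, mul_pow]; ring

variable {V : Type*} [Fintype V] {G : SimpleGraph V} {r : ℕ}

/-- Vertices outside a small set `W` still see at least half of the complement of `W`. -/
theorem card_compl_inter_nonnbr (hn : Fintype.card V ≤ 7 * r) (hdeg : ∀ v, 4 * r ≤ #(nb G v))
    (W : Finset V) (hW : 2 * #W ≤ r) (v : V) :
    (#(Wᶜ ∩ (nb G v)ᶜ) : ℝ) ≤ (1 / 2) * #(Wᶜ) := by
  have h1 : #(Wᶜ) = #(Wᶜ ∩ (nb G v)ᶜ) + #(Wᶜ ∩ nb G v) := by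
    rw [← Finset.card_inter_add_card_sdiff (Wᶜ) (nb G v)]
    rw [Finset.sdiff_eq_inter_compl, add_comm]
  have h2 : #(nb G v) ≤ #W + #(Wᶜ ∩ nb G v) := by
    refine (Finset.card_le_card (t := W ∪ (Wᶜ ∩ nb G v)) ?_).trans (Finset.card_union_le _ _)
    intro x hx
    by_cases hxW : x ∈ W <;> simp [hxW, hx]
  have h3 := hdeg v
  have h4 : #(Wᶜ) ≤ Fintype.card V := Finset.card_le_univ _
  have : 2 * #(Wᶜ ∩ (nb G v)ᶜ) ≤ #(Wᶜ) := by omega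
  have : (2 : ℝ) * #(Wᶜ ∩ (nb G v)ᶜ) ≤ #(Wᶜ) := by exact_mod_cast this
  linarith

theorem undom_image {m : ℕ} (p : Fin m → V) :
    undom G (univ.image p) = univ.filter fun v => ∀ i, p i ∈ (nb G v)ᶜ := by
  ext v
  simp [undom, nb]

/-- A random `m`-tuple from `Wᶜ`: it dominates almost everything, and it lies inside few of the
small sets `A j`. -/
theorem exists_tuple (hV : 0 < Fintype.card V) (hn : Fintype.card V ≤ 7 * r)
    (hdeg : ∀ v, 4 * r ≤ #(nb G v))
    (W : Finset V) (hW : 2 * #W ≤ r) (m : ℕ) {ι : Type*} (J : Finset ι) (A : ι → Finset V)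
    (hA : ∀ j ∈ J, (#(A j) : ℝ) ≤ 2 * (Fintype.card V / 2 ^ m)) :
    ∃ p : Fin m → V, (∀ i, p i ∉ W) ∧
      (#(undom G (univ.image p)) : ℝ) ≤ 2 * (Fintype.card V / 2 ^ m) ∧
      (#(J.filter fun j => ∀ i, p i ∈ A j) : ℝ) ≤ 2 * (#J * (4 / 2 ^ m) ^ m) := by
  obtain ⟨v₀⟩ := Fintype.card_pos_iff.1 hV
  have hWc : #W + #(Wᶜ) = Fintype.card V := Finset.card_add_card_compl W
  have hlt := (hdeg v₀).trans_lt (card_nb_lt G v₀)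
  have hR : Fintype.card V ≤ 2 * #(Wᶜ) := by omega
  have hne : (Wᶜ).Nonempty := by rw [← Finset.card_pos]; omega
  have hP : (Fintype.piFinset fun _ : Fin m => Wᶜ).Nonempty :=
    Fintype.piFinset_nonempty.2 fun _ => hne
  have s1 := sum_card_tuples Wᶜ (univ : Finset V) (fun v => (nb G v)ᶜ) m (1 / 2)
    fun v _ => card_compl_inter_nonnbr hn hdeg W hW v
  have s2 := sum_card_tuples Wᶜ J A m (4 / 2 ^ m) fun j hj => by
    have h1 : (#(Wᶜ ∩ A j) : ℝ) ≤ #(A j) := by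
      exact_mod_cast Finset.card_le_card Finset.inter_subset_right
    have h2 : (Fintype.card V : ℝ) ≤ 2 * #(Wᶜ) := by exact_mod_cast hR
    have h3 := hA j hj
    have h4 : (Fintype.card V : ℝ) / 2 ^ m ≤ 2 * #(Wᶜ) / 2 ^ m := by gcongr
    calc (#(Wᶜ ∩ A j) : ℝ) ≤ 2 * (2 * #(Wᶜ) / 2 ^ m) := by linarith
      _ = 4 / 2 ^ m * #(Wᶜ) := by ring
  obtain ⟨p, hp, h1, h2⟩ := exists_le_two_mul _ hP _ _ (fun _ => Nat.cast_nonneg _)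
    (fun _ => Nat.cast_nonneg _) _ _ (by rw [Finset.card_univ]; positivity) s1 s2
  refine ⟨p, fun i => by simpa using Fintype.mem_piFinset.1 hp i, ?_, h2⟩
  rw [undom_image]
  refine h1.trans (le_of_eq ?_)
  rw [Finset.card_univ, one_div, inv_pow]
  rfl

/-- Once `2 ^ M` exceeds the order of the graph, some `M`-tuple dominates every vertex. -/
theorem exists_dominating_tuple (hV : 0 < Fintype.card V) (hn : Fintype.card V ≤ 7 * r)
    (hdeg : ∀ v, 4 * r ≤ #(nb G v))
    (W : Finset V) (hW : 2 * #W ≤ r) (M : ℕ) (hM : Fintype.card V < 2 ^ M) :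
    ∃ p : Fin M → V, (∀ i, p i ∉ W) ∧ undom G (univ.image p) = ∅ := by
  obtain ⟨v₀⟩ := Fintype.card_pos_iff.1 hV
  have hWc : #W + #(Wᶜ) = Fintype.card V := Finset.card_add_card_compl W
  have hlt := (hdeg v₀).trans_lt (card_nb_lt G v₀)
  have hne : (Wᶜ).Nonempty := by rw [← Finset.card_pos]; omega
  have hP : (Fintype.piFinset fun _ : Fin M => Wᶜ).Nonempty :=
    Fintype.piFinset_nonempty.2 fun _ => hne
  have s1 := sum_card_tuples Wᶜ (univ : Finset V) (fun v => (nb G v)ᶜ) M (1 / 2)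
    fun v _ => card_compl_inter_nonnbr hn hdeg W hW v
  obtain ⟨p, hp, h⟩ := Finset.exists_le_of_sum_le
    (g := fun _ => (#(univ : Finset V) : ℝ) * (1 / 2) ^ M) hP (by simpa using s1)
  refine ⟨p, fun i => by simpa using Fintype.mem_piFinset.1 hp i, ?_⟩
  rw [undom_image]
  rw [← Finset.card_eq_zero]
  have h3 : (Fintype.card V : ℝ) < 2 ^ M := by exact_mod_cast hM
  have h4 : (Fintype.card V : ℝ) * (1 / 2) ^ M < 1 := by
    rw [one_div, inv_pow, ← div_eq_mul_inv, div_lt_one (by positivity)]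
    exact h3
  rw [Finset.card_univ] at h
  have h5 := h.trans_lt h4
  have h6 : #(univ.filter fun v => ∀ i, p i ∈ (nb G v)ᶜ) < 1 := by
    rw [← Nat.cast_lt (α := ℝ), Nat.cast_one]
    simpa using h5
  omega

/-- Any two vertices have a common neighbour outside a small set, so a nonempty set `B₀` can be
made connected, and adjacent to each vertex of `X`, by adding at most `|B₀| + |X|` vertices: the
midpoints of paths of length two that start at a fixed vertex of `B₀`. -/
theorem exists_star_closure (hr : 1 ≤ r) (hn : Fintype.card V ≤ 7 * r)
    (hdeg : ∀ v, 4 * r ≤ #(nb G v))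
    (W : Finset V) (hW : 2 * #W ≤ r) (B₀ X : Finset V) (hB₀ : B₀.Nonempty)
    (hdis : ∀ b ∈ B₀, b ∉ W) :
    ∃ B : Finset V, B₀ ⊆ B ∧ (∀ b ∈ B, b ∉ W) ∧ #B ≤ 2 * #B₀ + #X ∧
      (G.induce (B : Set V)).Connected ∧ ∀ x ∈ X, ∃ b ∈ B, G.Adj x b := by
  obtain ⟨b₀, hb₀⟩ := hB₀
  have common : ∀ x, ∃ w, w ∉ W ∧ G.Adj b₀ w ∧ G.Adj x w := by
    intro x
    by_contra hcon
    push Not at hcon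
    have h1 : #(nb G b₀ ∩ nb G x) ≤ #W := by
      refine Finset.card_le_card fun w hw => ?_
      rw [mem_inter, mem_nb, mem_nb] at hw
      by_contra hwW
      exact hcon w hwW hw.1 hw.2
    have h2 := Finset.card_union_add_card_inter (nb G b₀) (nb G x)
    have h3 : #(nb G b₀ ∪ nb G x) ≤ Fintype.card V := Finset.card_le_univ _
    have h4 := hdeg b₀
    have h5 := hdeg x
    omega
  choose w hwW hw₀ hwx using common
  refine ⟨B₀ ∪ (B₀ ∪ X).image w, Finset.subset_union_left, ?_, ?_, ?_, ?_⟩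
  · intro b hb
    rcases mem_union.1 hb with hb | hb
    · exact hdis b hb
    · obtain ⟨x, -, rfl⟩ := mem_image.1 hb
      exact hwW x
  · have h1 := Finset.card_union_le B₀ ((B₀ ∪ X).image w)
    have h2 : #((B₀ ∪ X).image w) ≤ #(B₀ ∪ X) := Finset.card_image_le
    have h3 := Finset.card_union_le B₀ X
    omega
  · have mem₀ : b₀ ∈ ((B₀ ∪ (B₀ ∪ X).image w : Finset V) : Set V) := by simp [hb₀]
    refine connected_induce_of_reachable b₀ mem₀ ?_
    have hw_reach : ∀ x (hx : w x ∈ ((B₀ ∪ (B₀ ∪ X).image w : Finset V) : Set V)),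
        (G.induce ((B₀ ∪ (B₀ ∪ X).image w : Finset V) : Set V)).Reachable ⟨b₀, mem₀⟩ ⟨w x, hx⟩ :=
      fun x hx => SimpleGraph.Adj.reachable (G := G.induce _) (hw₀ x)
    intro x hx
    rcases mem_union.1 (mem_coe.1 hx) with hxB | hxw
    · have hmem : w x ∈ ((B₀ ∪ (B₀ ∪ X).image w : Finset V) : Set V) := by
        rw [mem_coe]
        exact mem_union_right _ (mem_image_of_mem _ (mem_union_left _ hxB))
      exact (hw_reach x hmem).trans
        (SimpleGraph.Adj.reachable (G := G.induce _) (show G.Adj (w x) x from (hwx x).symm))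
    · obtain ⟨y, -, rfl⟩ := mem_image.1 hxw
      exact hw_reach y hx
  · intro x hx
    exact ⟨w x, mem_union_right _ (mem_image_of_mem _ (mem_union_right _ hx)), hwx x⟩

theorem undom_anti {B B' : Finset V} (h : B ⊆ B') : undom G B' ⊆ undom G B := by
  intro v hv
  simp only [undom, mem_filter, mem_univ, true_and] at hv ⊢
  exact fun b hb => hv b (h hb)

/-- A partial model in `G` of the subgraph of `H` induced by `T`. Branch sets of vertices in `S`
dominate `G`, and those of the other vertices dominate all but a proportion `2 / 2 ^ m` of it. -/
structure PartialModel {U : Type*} (G : SimpleGraph V) (H : SimpleGraph U) (S : Finset U) (m : ℕ)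
    (T : Finset U) (φ : U → Finset V) : Prop where
  nonempty : ∀ i ∈ T, (φ i).Nonempty
  connected : ∀ i ∈ T, (G.induce (φ i : Set V)).Connected
  disjoint : ∀ i ∈ T, ∀ j ∈ T, i ≠ j → Disjoint (φ i) (φ j)
  adj : ∀ i ∈ T, ∀ j ∈ T, H.Adj i j → ∃ u ∈ φ i, ∃ v ∈ φ j, G.Adj u v
  undom_of_mem : ∀ i ∈ T, i ∈ S → undom G (φ i) = ∅
  undom_of_not_mem : ∀ i ∈ T, i ∉ S →
    (#(undom G (φ i)) : ℝ) ≤ 2 * (Fintype.card V / 2 ^ m)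

theorem PartialModel.insert {U : Type*} {H : SimpleGraph U} {S : Finset U} {m : ℕ}
    {T : Finset U} {φ : U → Finset V} (h : PartialModel G H S m T φ) {a : U} (ha : a ∉ T)
    {B : Finset V} (hne : B.Nonempty) (hcon : (G.induce (B : Set V)).Connected)
    (hdis : ∀ b ∈ B, b ∉ T.biUnion φ)
    (hadj : ∀ j ∈ T, H.Adj a j → ∃ u ∈ B, ∃ v ∈ φ j, G.Adj u v)
    (hS : a ∈ S → undom G B = ∅)
    (hnS : a ∉ S → (#(undom G B) : ℝ) ≤ 2 * (Fintype.card V / 2 ^ m)) :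
    PartialModel G H S m (insert a T) (Function.update φ a B) := by
  have hup : ∀ i ∈ T, Function.update φ a B i = φ i := fun i hi =>
    Function.update_of_ne (by rintro rfl; exact ha hi) _ _
  have hBd : ∀ i ∈ T, Disjoint B (φ i) := fun i hi =>
    Finset.disjoint_left.2 fun b hb hb' => hdis b hb (mem_biUnion.2 ⟨i, hi, hb'⟩)
  refine ⟨?_, ?_, ?_, ?_, ?_, ?_⟩
  · intro i hi
    rcases mem_insert.1 hi with rfl | hi
    · simpa using hne
    · rw [hup i hi]; exact h.nonempty i hi
  · intro i hi
    rcases mem_insert.1 hi with rfl | hi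
    · rw [Function.update_self]; exact hcon
    · rw [hup i hi]; exact h.connected i hi
  · intro i hi j hj hij
    rcases mem_insert.1 hi with rfl | hi' <;> rcases mem_insert.1 hj with rfl | hj'
    · exact absurd rfl hij
    · rw [hup j hj', Function.update_self]; exact hBd j hj'
    · rw [hup i hi', Function.update_self]; exact (hBd i hi').symm
    · rw [hup i hi', hup j hj']; exact h.disjoint i hi' j hj' hij
  · intro i hi j hj hij
    rcases mem_insert.1 hi with rfl | hi' <;> rcases mem_insert.1 hj with rfl | hj'
    · exact absurd rfl hij.ne
    · rw [hup j hj', Function.update_self]; exact hadj j hj' hij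
    · rw [hup i hi', Function.update_self]
      obtain ⟨u, hu, v, hv, huv⟩ := hadj i hi' hij.symm
      exact ⟨v, hv, u, hu, huv.symm⟩
    · rw [hup i hi', hup j hj']; exact h.adj i hi' j hj' hij
  · intro i hi hiS
    rcases mem_insert.1 hi with rfl | hi
    · rw [Function.update_self]; exact hS hiS
    · rw [hup i hi]; exact h.undom_of_mem i hi hiS
  · intro i hi hiS
    rcases mem_insert.1 hi with rfl | hi
    · rw [Function.update_self]; exact hnS hiS
    · rw [hup i hi]; exact h.undom_of_not_mem i hi hiS

theorem exists_adj_of_undom_eq_empty {B : Finset V} (h : undom G B = ∅) (v : V) :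
    ∃ b ∈ B, G.Adj v b := by
  by_contra hcon
  push Not at hcon
  have : v ∈ undom G B := by simpa [undom] using hcon
  rw [h] at this
  simp at this

theorem card_biUnion_update {U α : Type*} {T : Finset U} {φ : U → Finset α} {a : U} (ha : a ∉ T)
    (B : Finset α) :
    #((insert a T).biUnion (Function.update φ a B)) ≤ #(T.biUnion φ) + #B := by
  rw [Finset.biUnion_insert, Function.update_self, add_comm]
  refine (Finset.card_union_le _ _).trans (Nat.add_le_add_left (le_of_eq ?_) _)
  congr 1
  refine Finset.biUnion_congr rfl fun i hi => ?_
  exact Function.update_of_ne (by rintro rfl; exact ha hi) _ _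

end Dense

/-! ### Embedding the branch sets -/

section Embed
open Classical Finset

variable {V : Type*} [Fintype V] {G : SimpleGraph V} {r : ℕ} {U : Type*}

/-- The ordered pairs of adjacent vertices of `H` inside `T`. -/
noncomputable def pairsIn (H : SimpleGraph U) (T : Finset U) : Finset (U × U) :=
  (T ×ˢ T).filter fun p => H.Adj p.1 p.2

/-- The number of vertices of `G` spent on a partial model on `T`: a vertex of `S` costs `2M`,
any other vertex costs `2m`, and the last term pays for repairing the pairs of branch sets without
an edge between them. -/
noncomputable def budget (H : SimpleGraph U) (S : Finset U) (m M : ℕ) (T : Finset U) : ℝ :=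
  2 * M * #(T ∩ S) + 2 * m * #(T \ S) + 2 * (4 / 2 ^ m) ^ m * #(pairsIn H (T \ S))

theorem budget_mono (H : SimpleGraph U) (S : Finset U) (m M : ℕ) {T T' : Finset U} (h : T ⊆ T') :
    budget H S m M T ≤ budget H S m M T' := by
  have h1 : #(T ∩ S) ≤ #(T' ∩ S) := Finset.card_le_card (Finset.inter_subset_inter_right h)
  have h2 : #(T \ S) ≤ #(T' \ S) := Finset.card_le_card (Finset.sdiff_subset_sdiff h le_rfl)
  have h3 : #(pairsIn H (T \ S)) ≤ #(pairsIn H (T' \ S)) := by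
    refine Finset.card_le_card (Finset.filter_subset_filter _ ?_)
    exact Finset.product_subset_product (Finset.sdiff_subset_sdiff h le_rfl)
      (Finset.sdiff_subset_sdiff h le_rfl)
  unfold budget
  gcongr

theorem budget_insert_of_mem (H : SimpleGraph U) (S : Finset U) (m M : ℕ) {T : Finset U} {a : U}
    (ha : a ∉ T) (haS : a ∈ S) :
    budget H S m M (insert a T) = budget H S m M T + 2 * M := by
  unfold budget
  rw [Finset.insert_inter_of_mem haS, Finset.insert_sdiff_of_mem _ haS,
    Finset.card_insert_of_notMem (by simp [ha])]
  push_cast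
  ring

theorem budget_insert_of_not_mem (H : SimpleGraph U) (S : Finset U) (m M : ℕ) {T : Finset U}
    {a : U} (ha : a ∉ T) (haS : a ∉ S) :
    budget H S m M T + 2 * m + 2 * (4 / 2 ^ m) ^ m * #((T \ S).filter fun j => H.Adj a j)
      ≤ budget H S m M (insert a T) := by
  have h : #(pairsIn H (T \ S)) + #((T \ S).filter fun j => H.Adj a j)
      ≤ #(pairsIn H (insert a (T \ S))) := by
    rw [← Finset.card_image_of_injective ((T \ S).filter fun j => H.Adj a j)
      (Prod.mk_right_injective a), ← Finset.card_union_of_disjoint]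
    · refine Finset.card_le_card fun p hp => ?_
      simp only [pairsIn, mem_union, mem_filter, mem_product, mem_image, mem_insert] at hp ⊢
      rcases hp with ⟨⟨h1, h2⟩, h3⟩ | ⟨j, ⟨h1, h2⟩, rfl⟩
      · exact ⟨⟨Or.inr h1, Or.inr h2⟩, h3⟩
      · exact ⟨⟨Or.inl rfl, Or.inr h1⟩, h2⟩
    · rw [Finset.disjoint_left]
      intro p hp hp'
      simp only [pairsIn, mem_filter, mem_product, mem_image] at hp hp'
      obtain ⟨j, -, rfl⟩ := hp'
      exact ha (Finset.mem_sdiff.1 hp.1.1).1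
  have h' : (#(pairsIn H (T \ S)) : ℝ) + #((T \ S).filter fun j => H.Adj a j)
      ≤ #(pairsIn H (insert a (T \ S))) := by exact_mod_cast h
  unfold budget
  rw [Finset.insert_inter_of_notMem haS, Finset.insert_sdiff_of_notMem _ haS,
    Finset.card_insert_of_notMem (by simp [ha])]
  have hk : (0 : ℝ) ≤ 2 * (4 / 2 ^ m) ^ m := by positivity
  have := mul_le_mul_of_nonneg_left h' hk
  push_cast
  linarith

/-- Branch sets are embedded one vertex at a time, in any order. -/
theorem exists_partialModel [Fintype U] (hV : 0 < Fintype.card V) (hr : 1 ≤ r)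
    (hn : Fintype.card V ≤ 7 * r)
    (hdeg : ∀ v, 4 * r ≤ #(nb G v)) (H : SimpleGraph U) (S : Finset U) {m M : ℕ} (hm : 1 ≤ m)
    (hM1 : 1 ≤ M) (hM : Fintype.card V < 2 ^ M)
    (hbud : 2 * budget H S m M univ ≤ r) (T : Finset U) :
    ∃ φ, PartialModel G H S m T φ ∧ (#(T.biUnion φ) : ℝ) ≤ budget H S m M T := by
  induction T using Finset.induction_on with
  | empty =>
    refine ⟨fun _ => ∅, by constructor <;> simp, ?_⟩
    simp [budget, pairsIn]
  | insert a T ha ih =>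
    obtain ⟨φ, hφ, hc⟩ := ih
    have hW : 2 * #(T.biUnion φ) ≤ r := by
      have := budget_mono H S m M (Finset.subset_univ T)
      have : (2 : ℝ) * #(T.biUnion φ) ≤ r := by linarith
      exact_mod_cast this
    by_cases haS : a ∈ S
    · obtain ⟨p, hpW, hp⟩ := exists_dominating_tuple hV hn hdeg _ hW M hM
      obtain ⟨B, hB₀, hBW, hBc, hcon, -⟩ := exists_star_closure hr hn hdeg _ hW
        (univ.image p) ∅ (Finset.image_nonempty.2 ⟨⟨0, hM1⟩, mem_univ _⟩) (by simpa using hpW)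
      have hB : undom G B = ∅ := Finset.subset_empty.1 (hp ▸ undom_anti hB₀)
      have hne : B.Nonempty := Finset.Nonempty.mono hB₀
        (Finset.image_nonempty.2 ⟨⟨0, hM1⟩, mem_univ _⟩)
      refine ⟨_, hφ.insert ha hne hcon hBW ?_ (fun _ => hB) (fun h => absurd haS h), ?_⟩
      · intro j hj _
        obtain ⟨v, hv⟩ := hφ.nonempty j hj
        obtain ⟨b, hb, hbv⟩ := exists_adj_of_undom_eq_empty hB v
        exact ⟨b, hb, v, hv, hbv.symm⟩
      · have h1 : #((insert a T).biUnion (Function.update φ a B)) ≤ #(T.biUnion φ) + 2 * M := by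
          have e1 := card_biUnion_update (φ := φ) ha B
          have e2 : #(univ.image p) ≤ M := Finset.card_image_le.trans (by simp)
          simp only [Finset.card_empty] at hBc
          omega
        rw [budget_insert_of_mem H S m M ha haS]
        have h1' : (#((insert a T).biUnion (Function.update φ a B)) : ℝ)
          ≤ #(T.biUnion φ) + 2 * M := by exact_mod_cast h1
        linarith
    · set J := (T \ S).filter fun j => H.Adj a j with hJ
      have hJT : ∀ j ∈ J, j ∈ T ∧ j ∉ S := fun j hj =>
        Finset.mem_sdiff.1 (Finset.mem_filter.1 hj).1
      obtain ⟨p, hpW, hp, hbad⟩ := exists_tuple hV hn hdeg _ hW m J (fun j => undom G (φ j))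
        fun j hj => hφ.undom_of_not_mem j (hJT j hj).1 (hJT j hj).2
      set bad := J.filter fun j => ∀ i, p i ∈ undom G (φ j) with hbad_def
      obtain ⟨v₀⟩ := Fintype.card_pos_iff.1 hV
      have hrep : ∀ j, ∃ v, j ∈ T → v ∈ φ j := by
        intro j
        by_cases hj : j ∈ T
        · obtain ⟨v, hv⟩ := hφ.nonempty j hj
          exact ⟨v, fun _ => hv⟩
        · exact ⟨v₀, fun h => absurd h hj⟩
      choose rep hrep using hrep
      obtain ⟨B, hB₀, hBW, hBc, hcon, hBX⟩ := exists_star_closure hr hn hdeg _ hW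
        (univ.image p) (bad.image rep) (Finset.image_nonempty.2 ⟨⟨0, hm⟩, mem_univ _⟩)
        (by simpa using hpW)
      have hne : B.Nonempty := Finset.Nonempty.mono hB₀
        (Finset.image_nonempty.2 ⟨⟨0, hm⟩, mem_univ _⟩)
      refine ⟨_, hφ.insert ha hne hcon hBW ?_ (fun h => absurd h haS) (fun _ => ?_), ?_⟩
      · intro j hj haj
        by_cases hjS : j ∈ S
        · obtain ⟨b, hb⟩ := hne
          obtain ⟨c, hc, hbc⟩ := exists_adj_of_undom_eq_empty (hφ.undom_of_mem j hj hjS) b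
          exact ⟨b, hb, c, hc, hbc⟩
        · have hjJ : j ∈ J := Finset.mem_filter.2 ⟨Finset.mem_sdiff.2 ⟨hj, hjS⟩, haj⟩
          by_cases hjb : ∀ i, p i ∈ undom G (φ j)
          · obtain ⟨b, hb, hbr⟩ := hBX (rep j)
              (mem_image_of_mem _ (Finset.mem_filter.2 ⟨hjJ, hjb⟩))
            exact ⟨b, hb, rep j, hrep j hj, hbr.symm⟩
          · push Not at hjb
            obtain ⟨i, hi⟩ := hjb
            simp only [undom, mem_filter, mem_univ, true_and] at hi
            push Not at hi
            obtain ⟨c, hc, hic⟩ := hi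
            exact ⟨p i, hB₀ (mem_image_of_mem _ (mem_univ _)), c, hc, hic⟩
      · have : (#(undom G B) : ℝ) ≤ #(undom G (univ.image p)) := by
          exact_mod_cast Finset.card_le_card (undom_anti hB₀)
        exact this.trans hp
      · have h1 : #((insert a T).biUnion (Function.update φ a B))
            ≤ #(T.biUnion φ) + 2 * m + #bad := by
          have e1 := card_biUnion_update (φ := φ) ha B
          have e2 : #(univ.image p) ≤ m := Finset.card_image_le.trans (by simp)
          have e3 : #(bad.image rep) ≤ #bad := Finset.card_image_le
          omega
        have h2 := budget_insert_of_not_mem H S m M ha haS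
        rw [← hJ] at h2
        have h1' : (#((insert a T).biUnion (Function.update φ a B)) : ℝ)
          ≤ #(T.biUnion φ) + 2 * m + #bad := by exact_mod_cast h1
        linarith

/-- A dense graph contains every graph whose budget is at most half of `r`. -/
theorem hasMinor_of_budget [Fintype U] (hV : 0 < Fintype.card V) (hr : 1 ≤ r)
    (hn : Fintype.card V ≤ 7 * r)
    (hdeg : ∀ v, 4 * r ≤ #(nb G v)) (H : SimpleGraph U) (S : Finset U) {m M : ℕ} (hm : 1 ≤ m)
    (hM1 : 1 ≤ M) (hM : Fintype.card V < 2 ^ M)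
    (hbud : 2 * budget H S m M univ ≤ r) : HasMinor G H := by
  obtain ⟨φ, hφ, -⟩ := exists_partialModel hV hr hn hdeg H S hm hM1 hM hbud univ
  refine ⟨fun u => (φ u : Set V), fun u => hφ.nonempty u (mem_univ _),
    fun u => hφ.connected u (mem_univ _), ?_, fun u v h => hφ.adj u (mem_univ _) v (mem_univ _) h⟩
  intro u v huv
  exact Finset.disjoint_coe.2 (hφ.disjoint u (mem_univ _) v (mem_univ _) huv)

theorem card_pairsIn_compl [Fintype U] (H : SimpleGraph U) (S : Finset U) :
    #(pairsIn H (univ \ S)) = 2 * Nat.card (H.induce ((S : Set U)ᶜ)).edgeSet := by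
  rw [← card_adjPairs_eq_edges]
  symm
  refine Finset.card_bij (fun p _ => (p.1.1, p.2.1)) ?_ ?_ ?_
  · rintro ⟨⟨x, hx⟩, ⟨y, hy⟩⟩ h
    rw [mem_adjPairs] at h
    simp only [pairsIn, mem_filter, mem_product, mem_sdiff, mem_univ, true_and]
    exact ⟨⟨hx, hy⟩, h⟩
  · rintro ⟨x, y⟩ _ ⟨x', y'⟩ _ h
    simp only [Prod.mk.injEq] at h
    rw [Subtype.ext h.1, Subtype.ext h.2]
  · rintro ⟨x, y⟩ h
    simp only [pairsIn, mem_filter, mem_product, mem_sdiff, mem_univ, true_and] at h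
    exact ⟨(⟨x, h.1.1⟩, ⟨y, h.1.2⟩), mem_adjPairs.2 h.2, rfl⟩

theorem budget_univ [Fintype U] (H : SimpleGraph U) (S : Finset U) (m M : ℕ) {s t : ℕ}
    (ht : 0 < t) (hU : Fintype.card U = s + t) (hS : #S = s) :
    budget H S m M univ = 2 * M * s + 2 * m * t
      + 2 * (4 / 2 ^ m) ^ m * (avgDeg (H.induce ((S : Set U)ᶜ)) * t) := by
  have hin : #(univ ∩ S) = s := by rw [Finset.univ_inter, hS]
  have hout : #(univ \ S) = t := by
    rw [Finset.card_univ_sdiff]; omega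
  have hcard : Nat.card ((S : Set U)ᶜ : Set U) = t := by
    rw [Nat.card_coe_set_eq, ← Finset.coe_compl, Set.ncard_coe_finset, Finset.card_compl]
    omega
  have htR : (0 : ℝ) < t := by exact_mod_cast ht
  have hpairs : (#(pairsIn H (univ \ S)) : ℝ) = avgDeg (H.induce ((S : Set U)ᶜ)) * t := by
    rw [card_pairsIn_compl, avgDeg, hcard, div_mul_cancel₀ _ htR.ne']
    push_cast
    rfl
  rw [budget, hpairs, hin, hout]

end Embed

/-! ### Numerical choices and conclusion -/

section Numerics
open Finset

/-- The choice of `m`: it is of order `√(ln (d + 2))`, and `2 ^ (m (m - 2))` exceeds `d`. -/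
theorem exists_m (d : ℝ) (hd : 0 ≤ d) : ∃ m : ℕ, 4 ≤ m ∧
    (m : ℝ) ≤ 10 * Real.sqrt (Real.log (d + 2)) ∧ (4 / 2 ^ m : ℝ) ^ m * d ≤ 1 := by
  set q := Real.sqrt (Real.log (d + 2)) with hq
  have hl2 : 0.69 < Real.log 2 := by have := Real.log_two_gt_d9; linarith
  have hL : Real.log 2 ≤ Real.log (d + 2) := Real.log_le_log (by norm_num) (by linarith)
  have hqq : q ^ 2 = Real.log (d + 2) := Real.sq_sqrt (by linarith)
  have hq0 : 0 ≤ q := Real.sqrt_nonneg _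
  have hq8 : 0.8 ≤ q := by
    by_contra h
    push Not at h
    nlinarith
  refine ⟨⌈2 * q⌉₊ + 4, by omega, ?_, ?_⟩
  · have := Nat.ceil_lt_add_one (show 0 ≤ 2 * q by linarith)
    push_cast
    linarith
  · set k := ⌈2 * q⌉₊ with hk
    have hkq : 2 * q ≤ k := Nat.le_ceil _
    have h1 : d ≤ 2 ^ ((k + 4) * (k + 2)) := by
      have e1 : d + 2 = Real.exp (Real.log (d + 2)) := (Real.exp_log (by linarith)).symm
      have e2 : Real.exp (Real.log (d + 2)) ≤ Real.exp (((k + 4) * (k + 2) : ℕ) * Real.log 2) := by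
        refine Real.exp_le_exp.2 ?_
        rw [← hqq]
        push_cast
        have e3 : 4 * q ^ 2 ≤ ((k : ℝ) + 4) * (k + 2) := by nlinarith
        nlinarith
      rw [Real.exp_nat_mul, Real.exp_log (show (0 : ℝ) < 2 by norm_num), ← e1] at e2
      linarith
    calc (4 / 2 ^ (k + 4) : ℝ) ^ (k + 4) * d
        ≤ (4 / 2 ^ (k + 4) : ℝ) ^ (k + 4) * 2 ^ ((k + 4) * (k + 2)) := by gcongr
      _ = 1 := by
        rw [mul_comm (k + 4) (k + 2), pow_mul, ← mul_pow, div_mul_eq_mul_div,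
          show (4 : ℝ) * 2 ^ (k + 2) = 2 ^ (k + 4) by ring, div_self (by positivity), one_pow]

/-- The choice of `M`: a set of `M` vertices can dominate a graph of order `112tm`, and `s` such
sets fit into a graph of that order because `s = O(t / ln t)`. -/
theorem exists_M (s t m : ℕ) (ht : 3 ≤ t) (hm : 4 ≤ m)
    (hs : (s : ℝ) ≤ (1 / 100000 : ℝ) * t / Real.log t) :
    ∃ M : ℕ, 1 ≤ M ∧ 7 * (16 * t * m) < 2 ^ M ∧ (M : ℝ) * s ≤ 2 * t * m := by
  have htR : (3 : ℝ) ≤ t := by exact_mod_cast ht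
  have hmR : (4 : ℝ) ≤ m := by exact_mod_cast hm
  have hlog : 1 ≤ Real.log t := by
    rw [Real.le_log_iff_exp_le (by linarith)]
    have := Real.exp_one_lt_d9
    linarith
  have hl2 : 0.69 < Real.log 2 := by have := Real.log_two_gt_d9; linarith
  refine ⟨8 + (Nat.log 2 t + 1) + m, by omega, ?_, ?_⟩
  · have h1 : t < 2 ^ (Nat.log 2 t + 1) := Nat.lt_pow_succ_log_self (by norm_num) t
    have h2 : m < 2 ^ m := Nat.lt_two_pow_self
    rw [pow_add, pow_add]
    have h3 : t * m ≤ 2 ^ (Nat.log 2 t + 1) * 2 ^ m := Nat.mul_le_mul h1.le h2.le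
    have h4 : 0 < t * m := Nat.mul_pos (by omega) (by omega)
    nlinarith
  · have hs' : (s : ℝ) * Real.log t ≤ (1 / 100000 : ℝ) * t := by
      rwa [le_div_iff₀ (by linarith)] at hs
    have hs0 : (0 : ℝ) ≤ s := Nat.cast_nonneg s
    have h1 : (s : ℝ) ≤ (1 / 100000 : ℝ) * t := by nlinarith
    have h2 : (Nat.log 2 t : ℝ) * Real.log 2 ≤ Real.log t := by
      rw [← Real.log_pow]
      refine Real.log_le_log (by positivity) ?_
      exact_mod_cast Nat.pow_log_le_self 2 (by omega)
    have h3 : (Nat.log 2 t : ℝ) ≤ 2 * Real.log t := by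
      have : (0 : ℝ) ≤ Nat.log 2 t := Nat.cast_nonneg _
      nlinarith
    have h4 : (Nat.log 2 t : ℝ) * s ≤ t := by nlinarith
    have h5 : (m : ℝ) * s ≤ (1 / 100000 : ℝ) * t * m := by nlinarith
    push_cast
    nlinarith

end Numerics

/-- There is a constant `c > 0` such that for all integers `s ≥ 0` and
`t ≥ 3` with `s ≤ 10⁻⁵·t/ln t`, for every graph `H` on `s + t` vertices and every set
`S` of `s` vertices of `H`, `f(H) ≤ c·t·√(ln(d(H − S) + 2))`. -/
theorem statement2 :
    ∃ c : ℝ, 0 < c ∧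
      ∀ (s t : ℕ), 3 ≤ t → (s : ℝ) ≤ (1 / 100000 : ℝ) * t / Real.log t →
        ∀ (U : Type) [Fintype U], ∀ (H : SimpleGraph U) (S : Finset U),
          Fintype.card U = s + t → S.card = s →
          minorF H ≤ c * t * Real.sqrt (Real.log (avgDeg (H.induce ((S : Set U)ᶜ)) + 2)) := by
  refine ⟨2560, by norm_num, ?_⟩
  intro s t ht hs U _ H S hU hS
  set d := avgDeg (H.induce ((S : Set U)ᶜ)) with hd
  have hd0 : 0 ≤ d := by unfold d avgDeg; positivity
  obtain ⟨m, hm4, hmq, hmd⟩ := exists_m d hd0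
  obtain ⟨M, hM1, hM, hMs⟩ := exists_M s t m ht hm4 hs
  have hUne : Nonempty U := Fintype.card_pos_iff.1 (by omega)
  have htR : (3 : ℝ) ≤ t := by exact_mod_cast ht
  have hmR : (4 : ℝ) ≤ m := by exact_mod_cast hm4
  refine csInf_le ⟨0, ?_⟩ ?_
  -- The empty graph has average degree `0` by convention and contains no nonempty minor.
  · intro D hD
    by_contra hneg
    push Not at hneg
    obtain ⟨φ, hne, -⟩ := hD Empty ⊥ (hneg.le.trans (by unfold avgDeg; positivity))
    obtain ⟨u⟩ := hUne
    exact (hne u).some.elim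
  · intro V _ G hG
    have hr : 1 ≤ 16 * t * m := Nat.mul_pos (by omega) (by omega)
    have havg : (256 * t * m : ℝ) ≤ avgDeg G := by
      refine le_trans ?_ hG
      nlinarith
    have hpos : 0 < avgDeg G := lt_of_lt_of_le (by positivity) havg
    have hV : 0 < Fintype.card V := by
      rw [Nat.pos_iff_ne_zero]
      intro h0
      simp [avgDeg, h0] at hpos
    have hE : 16 * (16 * t * m) * Fintype.card V ≤ (adjPairs G).card := by
      rw [card_adjPairs_eq_edges]
      have hVR : (0 : ℝ) < Fintype.card V := by exact_mod_cast hV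
      rw [avgDeg, Nat.card_eq_fintype_card (α := V), le_div_iff₀ hVR] at havg
      have : ((16 * (16 * t * m) * Fintype.card V : ℕ) : ℝ)
          ≤ ((2 * Nat.card G.edgeSet : ℕ) : ℝ) := by
        push_cast
        linarith
      exact_mod_cast this
    obtain ⟨V', _, G', hGG', hV', hn, hdeg⟩ := exists_dense_minor (16 * t * m) hr V G hV hE
    refine hGG'.trans (hasMinor_of_budget hV' hr hn hdeg H S
      (show 1 ≤ m by omega) hM1
      (hn.trans_lt hM) ?_)
    have hbad : (4 / 2 ^ m : ℝ) ^ m * (d * t) ≤ t := by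
      rw [← mul_assoc]
      exact mul_le_of_le_one_left (by positivity) hmd
    rw [budget_univ H S m M (by omega) hU hS, ← hd]
    push_cast
    nlinarith
end

section
/- Every graph G with n vertices and minimum degree at least n/2 has a connected dominating set of cardinality strictly less than 2·log₂ n. -/
/-! Write `n` for the number of vertices. Every closed neighbourhood has at least `n/2 + 1` vertices.
Two consequences carry the proof.

* Any two closed neighbourhoods meet (`exists_between`), so a connected set can be enlarged so as
  to contain any prescribed vertex by adding at most two vertices.
* Double counting shows that every nonempty set `U` contains more than `|U|/2` vertices of some
  closed neighbourhood (`exists_large_cover`).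

As long as the set of undominated vertices is nonempty, add the vertex provided by the second fact
for this set, together with a connecting vertex provided by the first. The number `u` of undominated
vertices drops to at most `(u - 1) / 2`, so `u + 1` is at least halved. A single vertex already gives
`u + 1 ≤ n / 2`, so for `2 ^ k ≤ n` there is a connected set of at most `2 * k - 1` vertices with
`(u + 1) * 2 ^ k ≤ n`. Taking `k = ⌊log₂ n⌋` forces `u = 0`, and `2 * k - 1 < 2 * log₂ n`. -/

open SimpleGraph

/-- `A` is a connected dominating set of `G`: the induced subgraph `G[A]` is connected
and every vertex of `G` is in `A` or adjacent to a vertex of `A`. -/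
def IsConnDomSet {V : Type*} (G : SimpleGraph V) (A : Set V) : Prop :=
  (G.induce A).Connected ∧ ∀ v ∉ A, ∃ a ∈ A, G.Adj a v

namespace ConnDom

open Finset

variable {V : Type} [Fintype V]

open scoped Classical in
/-- The closed neighbourhood of `v`, as a finset. -/
noncomputable def closedNbhd (G : SimpleGraph V) (v : V) : Finset V :=
  univ.filter fun u => v = u ∨ G.Adj v u

lemma mem_closedNbhd {G : SimpleGraph V} {v u : V} :
    u ∈ closedNbhd G v ↔ v = u ∨ G.Adj v u := by
  simp [closedNbhd]

lemma mem_closedNbhd_comm {G : SimpleGraph V} {v u : V} :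
    u ∈ closedNbhd G v ↔ v ∈ closedNbhd G u := by
  rw [mem_closedNbhd, mem_closedNbhd, eq_comm, G.adj_comm]

open scoped Classical in
/-- The vertices outside the closed neighbourhood of `A`. -/
noncomputable def undominated (G : SimpleGraph V) (A : Finset V) : Finset V :=
  univ.filter fun u => ∀ a ∈ A, u ∉ closedNbhd G a

lemma card_closedNbhd {G : SimpleGraph V}
    (hmin : ∀ v, (Fintype.card V : ℝ) / 2 ≤ Nat.card (G.neighborSet v)) (v : V) :
    Fintype.card V + 2 ≤ 2 * (closedNbhd G v).card := by
  classical
  have h1 : closedNbhd G v = insert v (G.neighborFinset v) := by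
    ext u
    simp [mem_closedNbhd, eq_comm]
  have h2 : (closedNbhd G v).card = Nat.card (G.neighborSet v) + 1 := by
    rw [h1, card_insert_of_notMem (by simp), Nat.card_eq_fintype_card,
      G.card_neighborSet_eq_degree, G.card_neighborFinset_eq_degree]
  have h3 : (Fintype.card V : ℝ) ≤ 2 * Nat.card (G.neighborSet v) := by
    linarith [hmin v]
  have h4 : Fintype.card V ≤ 2 * Nat.card (G.neighborSet v) := by exact_mod_cast h3
  omega

/-- The sizes of two closed neighbourhoods add up to more than the number of vertices, so they meet.
The common vertex `w` may coincide with `a` or with `v`. -/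
lemma exists_between {G : SimpleGraph V}
    (hN : ∀ v, Fintype.card V + 2 ≤ 2 * (closedNbhd G v).card) (a v : V) :
    ∃ w, w ∈ closedNbhd G a ∧ v ∈ closedNbhd G w := by
  classical
  have h1 := card_union_add_card_inter (closedNbhd G a) (closedNbhd G v)
  have h2 := card_le_univ (closedNbhd G a ∪ closedNbhd G v)
  have h3 : 0 < (closedNbhd G a ∩ closedNbhd G v).card := by
    have := hN a
    have := hN v
    omega
  obtain ⟨w, hw⟩ := card_pos.1 h3
  rw [mem_inter] at hw
  exact ⟨w, hw.1, mem_closedNbhd_comm.1 hw.2⟩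

open scoped Classical in
/-- Some closed neighbourhood contains more than half of `U`: the closed neighbourhoods of the
vertices of `U` have total size more than `n * |U| / 2`, so the average over all `n` vertices of
`|U ∩ N[v]|` exceeds `|U| / 2`. -/
lemma exists_large_cover {G : SimpleGraph V}
    (hN : ∀ v, Fintype.card V + 2 ≤ 2 * (closedNbhd G v).card)
    (U : Finset V) (hU : U.Nonempty) :
    ∃ v, U.card < 2 * (U.filter (· ∈ closedNbhd G v)).card := by
  classical
  by_contra! h
  have h1 : ∑ v : V, (U.filter (· ∈ closedNbhd G v)).card = ∑ u ∈ U, (closedNbhd G u).card := by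
    have := sum_card_bipartiteAbove_eq_sum_card_bipartiteBelow
      (fun v u : V => u ∈ closedNbhd G v) (s := univ) (t := U)
    simp only [bipartiteAbove, bipartiteBelow] at this
    rw [this]
    refine sum_congr rfl fun u _ => congrArg card ?_
    ext v
    simpa using mem_closedNbhd_comm
  have h2 : 2 * ∑ v : V, (U.filter (· ∈ closedNbhd G v)).card ≤ Fintype.card V * U.card := by
    rw [mul_sum]
    simpa using sum_le_sum fun v (_ : v ∈ univ) => h v
  have h3 : U.card * (Fintype.card V + 2) ≤ 2 * ∑ u ∈ U, (closedNbhd G u).card := by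
    rw [mul_sum]
    simpa using sum_le_sum fun u (_ : u ∈ U) => hN u
  have := hU.card_pos
  rw [← h1] at h3
  nlinarith

lemma connected_insert [DecidableEq V] {G : SimpleGraph V} {A : Finset V} {a w : V}
    (hA : (G.induce (A : Set V)).Connected) (ha : a ∈ A) (hw : w ∈ closedNbhd G a) :
    (G.induce ((insert w A : Finset V) : Set V)).Connected := by
  rcases mem_closedNbhd.1 hw with rfl | hadj
  · rwa [insert_eq_of_mem ha]
  · have h := SimpleGraph.induce_union_connected hA.preconnected
      (SimpleGraph.induce_pair_connected_of_adj hadj).preconnected ⟨a, by simpa using ha⟩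
    have e : ((insert w A : Finset V) : Set V) = (A : Set V) ∪ {a, w} := by
      ext x
      simp only [coe_insert, Set.mem_insert_iff, mem_coe, Set.mem_union, Set.mem_singleton_iff]
      constructor
      · tauto
      · rintro (h | rfl | h) <;> tauto
    rwa [e]

/-- The greedy construction, with `k + 1` rounds counting the initial single vertex. If everything is
already dominated, the last inequality is just the hypothesis on `k`. -/
lemma greedy {G : SimpleGraph V} [Nonempty V]
    (hN : ∀ v, Fintype.card V + 2 ≤ 2 * (closedNbhd G v).card) (k : ℕ)
    (hk : 2 ^ (k + 1) ≤ Fintype.card V) :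
    ∃ A : Finset V, (G.induce (A : Set V)).Connected ∧ A.card ≤ 2 * k + 1 ∧
      ((undominated G A).card + 1) * 2 ^ (k + 1) ≤ Fintype.card V := by
  classical
  induction k with
  | zero =>
    obtain ⟨v⟩ := ‹Nonempty V›
    refine ⟨{v}, ?_, by simp, ?_⟩
    · rw [coe_singleton]
      exact SimpleGraph.Connected.mk (SimpleGraph.Preconnected.of_subsingleton)
    · have e : undominated G {v} = (closedNbhd G v)ᶜ := by
        ext u
        simp [undominated]
      have := hN v
      have := card_le_univ (closedNbhd G v)
      rw [e, card_compl]
      omega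
  | succ k ih =>
    obtain ⟨A, hA, hcard, hu⟩ := ih (le_trans (Nat.pow_le_pow_right (by norm_num) (by omega)) hk)
    rcases (undominated G A).eq_empty_or_nonempty with h0 | hne
    · exact ⟨A, hA, by omega, by simpa [h0] using hk⟩
    · obtain ⟨v, hv⟩ := exists_large_cover hN _ hne
      obtain ⟨⟨a, ha⟩⟩ := hA.nonempty
      obtain ⟨w, haw, hwv⟩ := exists_between hN a v
      refine ⟨insert v (insert w A),
        connected_insert (connected_insert hA ha haw) (mem_insert_self w A) hwv, ?_, ?_⟩
      · have := card_insert_le v (insert w A)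
        have := card_insert_le w A
        omega
      · have hsub : undominated G (insert v (insert w A)) ⊆
            (undominated G A).filter (¬ · ∈ closedNbhd G v) := by
          intro u
          simp only [undominated, mem_filter, mem_univ, true_and, mem_insert]
          exact fun h => ⟨fun a ha => h a (Or.inr (Or.inr ha)), h v (Or.inl rfl)⟩
        have h1 := card_le_card hsub
        have h2 := card_filter_add_card_filter_not (s := undominated G A) (· ∈ closedNbhd G v)
        have h3 : 2 * ((undominated G (insert v (insert w A))).card + 1) ≤
            (undominated G A).card + 1 := by omega
        calc _ = 2 * ((undominated G (insert v (insert w A))).card + 1) * 2 ^ (k + 1) := by ring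
          _ ≤ _ := Nat.mul_le_mul_right _ h3
          _ ≤ _ := hu

end ConnDom

/-- Every graph `G` with `n ≥ 2` vertices and minimum degree at least `n/2`
has a connected dominating set of cardinality strictly less than `2·log₂ n`. -/
theorem statement3 (V : Type) [Fintype V] (hn : 2 ≤ Fintype.card V) (G : SimpleGraph V)
    (hmin : ∀ v, (Fintype.card V : ℝ) / 2 ≤ Nat.card (G.neighborSet v)) :
    ∃ A : Set V, IsConnDomSet G A ∧
      (Nat.card A : ℝ) < 2 * Real.logb 2 (Fintype.card V) := by
  classical
  have : Nonempty V := Fintype.card_pos_iff.1 (by omega)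
  obtain ⟨k, hk⟩ : ∃ k, Nat.log 2 (Fintype.card V) = k + 1 :=
    Nat.exists_eq_succ_of_ne_zero (Nat.log_pos (by norm_num) hn).ne'
  have hlow : 2 ^ (k + 1) ≤ Fintype.card V := hk ▸ Nat.pow_log_le_self 2 (by omega)
  have hhigh : Fintype.card V < 2 ^ (k + 1) * 2 := by
    rw [← pow_succ, ← hk]
    exact Nat.lt_pow_succ_log_self (by norm_num) _
  obtain ⟨A, hA, hcard, hu⟩ := ConnDom.greedy (ConnDom.card_closedNbhd hmin) k hlow
  have hu0 : (ConnDom.undominated G A).card = 0 := by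
    have h : ((ConnDom.undominated G A).card + 1) * 2 ^ (k + 1) < 2 * 2 ^ (k + 1) := by omega
    have := Nat.lt_of_mul_lt_mul_right h
    omega
  refine ⟨A, ⟨hA, fun v hv => ?_⟩, ?_⟩
  · have hv' : v ∉ ConnDom.undominated G A := by
      simp [Finset.card_eq_zero.1 hu0]
    simp only [ConnDom.undominated, Finset.mem_filter, Finset.mem_univ, true_and] at hv'
    push Not at hv'
    obtain ⟨a, ha, hav⟩ := hv'
    rcases ConnDom.mem_closedNbhd.1 hav with rfl | hadj
    · exact absurd ha hv
    · exact ⟨a, ha, hadj⟩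
  · have h1 : ((k + 1 : ℕ) : ℝ) ≤ Real.logb 2 (Fintype.card V) := by
      rw [Real.le_logb_iff_rpow_le (by norm_num) (by exact_mod_cast (by omega)),
        Real.rpow_natCast]
      exact_mod_cast hlow
    have h2 : ((Nat.card (A : Set V) : ℕ) : ℝ) ≤ 2 * k + 1 := by
      simpa using (by exact_mod_cast hcard : (A.card : ℝ) ≤ 2 * k + 1)
    push_cast at h1
    linarith
end

section
/- Every graph G with n vertices and minimum degree at least n/2 has a dominating set of cardinality at most ⌊log₂ n⌋. -/
open SimpleGraph

/-!
The proof is greedy. Every vertex lies in at least `n/2 + 1` closed neighbourhoods, so, by double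
counting, for every nonempty set `U` of undominated vertices some vertex `a` leaves strictly fewer
than `|U|/2` of them undominated (`exists_halving`). Since sizes are integers, `|U| ≤ 2^(m+1) - 2`
turns into at most `2^m - 2` after one step, so `m` vertices dominate such a `U`
(`exists_dominating_of_card`). The bound has the right shape from the first step on: any vertex `v`
leaves at most `n/2 - 1` vertices undominated, and `n/2 - 1 < 2^k - 1` for `k = ⌊log₂ n⌋`.
-/

open Classical in
/-- Double counting of the pairs `(a, v)`, `v ∈ U`, with `v` outside the closed neighbourhood
of `a`. -/
lemma exists_halving {V : Type} [Fintype V] (G : SimpleGraph V)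
    (h : ∀ v, 2 * (Finset.univ.filter fun a => ¬ (a = v ∨ G.Adj a v)).card + 2 ≤ Fintype.card V)
    (U : Finset V) (hU : U.Nonempty) :
    ∃ a, 2 * (U.filter fun v => ¬ (a = v ∨ G.Adj a v)).card < U.card := by
  by_contra hcon
  replace hcon := fun a => not_lt.mp (not_exists.mp hcon a)
  have hdc := Finset.sum_card_bipartiteAbove_eq_sum_card_bipartiteBelow
    (s := Finset.univ) (t := U) (fun a v : V => ¬ (a = v ∨ G.Adj a v))
  simp only [Finset.bipartiteAbove, Finset.bipartiteBelow] at hdc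
  have h1 := Finset.sum_le_sum fun a (_ : a ∈ (Finset.univ : Finset V)) => hcon a
  have h2 := Finset.sum_le_sum fun v (_ : v ∈ U) => h v
  rw [Finset.sum_add_distrib, ← Finset.mul_sum] at h2
  rw [← Finset.mul_sum, hdc] at h1
  simp only [Finset.sum_const, Finset.card_univ, smul_eq_mul] at h1 h2
  have := hU.card_pos
  nlinarith

open Classical in
lemma exists_dominating_of_card {V : Type} [Fintype V] (G : SimpleGraph V)
    (h : ∀ v, 2 * (Finset.univ.filter fun a => ¬ (a = v ∨ G.Adj a v)).card + 2 ≤ Fintype.card V)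
    (m : ℕ) : ∀ U : Finset V, U.card + 2 ≤ 2 ^ (m + 1) →
      ∃ A : Finset V, A.card ≤ m ∧ ∀ v ∈ U, ∃ a ∈ A, a = v ∨ G.Adj a v := by
  induction m with
  | zero =>
    intro U hU
    have : U = ∅ := Finset.card_eq_zero.mp (by omega)
    exact ⟨∅, by simp, by simp [this]⟩
  | succ m ih =>
    intro U hU
    rcases U.eq_empty_or_nonempty with rfl | hne
    · exact ⟨∅, by simp, by simp⟩
    obtain ⟨a, ha⟩ := exists_halving G h U hne
    obtain ⟨A, hA, hdom⟩ := ih (U.filter fun v => ¬ (a = v ∨ G.Adj a v))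
      (by rw [pow_succ] at hU ⊢; omega)
    refine ⟨insert a A, (Finset.card_insert_le _ _).trans (by omega), fun v hv => ?_⟩
    by_cases hav : a = v ∨ G.Adj a v
    · exact ⟨a, Finset.mem_insert_self _ _, hav⟩
    · obtain ⟨b, hb, hbv⟩ := hdom v (Finset.mem_filter.mpr ⟨hv, hav⟩)
      exact ⟨b, Finset.mem_insert_of_mem hb, hbv⟩

/-- Every graph `G` with `n ≥ 2` vertices and minimum degree at least `n/2`
has a dominating set of cardinality at most `⌊log₂ n⌋`. -/
theorem statement4 (V : Type) [Fintype V] (hn : 2 ≤ Fintype.card V) (G : SimpleGraph V)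
    (hmin : ∀ v, (Fintype.card V : ℝ) / 2 ≤ Nat.card (G.neighborSet v)) :
    ∃ A : Set V, (∀ v ∉ A, ∃ a ∈ A, G.Adj a v) ∧
      Nat.card A ≤ ⌊Real.logb 2 (Fintype.card V)⌋₊ := by
  classical
  have h : ∀ v, 2 * (Finset.univ.filter fun a => ¬ (a = v ∨ G.Adj a v)).card + 2
      ≤ Fintype.card V := by
    intro v
    have hd : Fintype.card V ≤ 2 * G.degree v := by
      have := hmin v
      rw [Nat.card_eq_fintype_card, G.card_neighborSet_eq_degree] at this
      have h' : (Fintype.card V : ℝ) ≤ 2 * G.degree v := by linarith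
      exact_mod_cast h'
    have hcl : (Finset.univ.filter fun a => a = v ∨ G.Adj a v) = insert v (G.neighborFinset v) := by
      ext a
      simp [G.adj_comm]
    have hsum := Finset.card_filter_add_card_filter_not (s := (Finset.univ : Finset V))
      (fun a => a = v ∨ G.Adj a v)
    rw [hcl, Finset.card_insert_of_notMem (by simp), G.card_neighborFinset_eq_degree,
      Finset.card_univ] at hsum
    omega
  have hlog : ⌊Real.logb 2 (Fintype.card V)⌋₊ = Nat.log 2 (Fintype.card V) := by
    exact_mod_cast Real.natFloor_logb_natCast 2 (Fintype.card V)
  rw [hlog]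
  have hlt := Nat.lt_pow_succ_log_self (b := 2) (by norm_num) (Fintype.card V)
  obtain ⟨m, hm⟩ : ∃ m, Nat.log 2 (Fintype.card V) = m + 1 :=
    Nat.exists_eq_succ_of_ne_zero (Nat.log_pos (by norm_num) hn).ne'
  rw [hm] at hlt ⊢
  obtain ⟨v⟩ : Nonempty V := Fintype.card_pos_iff.mp (by omega)
  have hv := h v
  obtain ⟨A, hA, hdom⟩ := exists_dominating_of_card G h m
    (Finset.univ.filter fun a => ¬ (a = v ∨ G.Adj a v))
    (by rw [Nat.succ_eq_add_one, pow_succ] at hlt; omega)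
  refine ⟨↑(insert v A), fun w hw => ?_, ?_⟩
  · rw [Finset.mem_coe, Finset.mem_insert, not_or] at hw
    by_cases hwv : G.Adj w v
    · exact ⟨v, by simp, hwv.symm⟩
    · obtain ⟨a, ha, haw⟩ := hdom w (by simp [hw.1, hwv])
      refine ⟨a, by simp [ha], haw.resolve_left ?_⟩
      rintro rfl
      exact hw.2 ha
  · rw [Nat.card_coe_set_eq, Set.ncard_coe_finset]
    exact (Finset.card_insert_le _ _).trans (by omega)
end

section
/- For all reals λ ∈ (1/2, 1) and ε ∈ (0, λ) there exists d₀ = d₀(λ, ε) such that, setting b := (1 − λ + ε)⁻¹: for every graph H with t vertices and average degree d ≥ d₀, every graph G with n ≥ (1 + ε)·⌈√(log_b d)⌉·t vertices and minimum degree at least λ·n contains H as a minor. -/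
/-!
Write `p = 1 - λ < 1 / 2`, so that every vertex of `G` has at most `p n` non-neighbours (itself
included), and `ℓ = ⌈√(log_b d)⌉`, so that `d (p + ε) ^ (ℓ ^ 2) ≤ 1`. Branch sets of about `ℓ`
random vertices suffice. Indeed two disjoint random `ℓ`-sets have no edge between them with
probability about `p ^ (ℓ ^ 2)`, so `H`, which has `d t / 2` edges, is expected to have only few
edges that are not realised.

Precisely, a random permutation of `V(G)` chooses a small reserve `R` of about `ε n / 8` vertices
and `M ≈ (1 + ε / 4) t` disjoint blocks of `ℓ` vertices, such that (`exists_good_perm`):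

* every vertex has at most `γ |R|` non-neighbours in `R`, for some constant `γ < 1 / 2`
  (`count_many_nonadj` and a union bound);
* all but few blocks are good, meaning that at most `p₂ ^ ℓ n` vertices have no neighbour in the
  block, where `p < p₂ < p + ε` (`count_bad`);
* at most `4 (2 p₂ ^ ℓ) ^ ℓ M ^ 2` ordered pairs of blocks with good first block have no edge
  between them (`count_fail`).

All these probabilities come from exposing the permutation one value at a time (`perm_step`).
Assigning the vertices of `H` to good blocks at random leaves at most `t` ordered pairs of
adjacent vertices of `H` without an edge between their blocks (`exists_perm_pairs`).

The reserve then repairs everything deterministically (`hasMinor_of_link`). Since `γ < 1 / 2`, any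
two vertices have many common neighbours in `R`, and any set has a vertex of `R` adjacent to at
least half of it. Halving repeatedly, a block becomes connected with `O(log ℓ)` reserve vertices
(`LinkProp.connect`), and each failing pair costs one more. Altogether `t · O(log ℓ)` vertices are
used, which is less than the reserve can afford because `|R|` is of order `ℓ t` and `ℓ → ∞` with
`d`.
-/

open SimpleGraph

/-! ### Connecting and linking sets through a reserve -/

lemma connected_singleton' {V : Type*} (G : SimpleGraph V) (r : V) :
    (G.induce ({r} : Set V)).Connected := by
  rw [induce_singleton_eq_top]
  exact connected_top

lemma connected_of_eq {V : Type*} {G : SimpleGraph V} {s t : Set V}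
    (hs : (G.induce s).Connected) (h : s = t) : (G.induce t).Connected := h ▸ hs

lemma connected_join {V : Type*} {G : SimpleGraph V} {s t : Set V}
    (hs : (G.induce s).Connected) (ht : (G.induce t).Connected) {u v : V}
    (hu : u ∈ s) (hv : v ∈ t) (h : G.Adj u v) : (G.induce (s ∪ t)).Connected :=
  connected_induce_union hs.preconnected ht.preconnected hu hv h

lemma connected_insert {V : Type*} {G : SimpleGraph V} {s : Set V}
    (hs : (G.induce s).Connected) {u v : V}
    (hu : u ∈ s) (h : G.Adj u v) : (G.induce (insert v s)).Connected := by
  rw [Set.insert_eq, Set.union_comm]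
  exact connected_join hs (connected_singleton' G v) hu rfl h

lemma connected_star {V : Type*} [DecidableEq V] {G : SimpleGraph V} (r : V) (A : Finset V)
    (hA : ∀ a ∈ A, G.Adj r a) : (G.induce (insert r (A : Set V))).Connected := by
  induction A using Finset.induction_on with
  | empty => exact connected_of_eq (connected_singleton' G r) (by simp)
  | insert a A ha ih =>
    rw [Finset.coe_insert, Set.insert_comm]
    exact connected_insert (ih fun b hb => hA b (by simp [hb])) (Set.mem_insert r _)
      (hA a (by simp))

/-- The properties of a reserve `R` that are used to repair branch sets, robustly against the
loss of any `B` already used vertices: any two vertices of `G` have an unused common neighbour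
in `R`, and any finite set `A` has an unused vertex of `R` adjacent to at least half of it (`A₀`
is the part left over). -/
structure LinkProp {V : Type*} [DecidableEq V] (G : SimpleGraph V) (R : Finset V) (B : ℕ) :
    Prop where
  common : ∀ U : Finset V, U.card ≤ B → ∀ u v : V, ∃ c ∈ R, c ∉ U ∧ G.Adj c u ∧ G.Adj c v
  halve : ∀ U : Finset V, U.card ≤ B → ∀ A : Finset V, ∃ r ∈ R, r ∉ U ∧
    ∃ A₀ ⊆ A, (∀ a ∈ A \ A₀, G.Adj r a) ∧ 2 * A₀.card ≤ A.card

open Classical in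
/-- `R` is a reserve as soon as every vertex has fewer than about half of `R` as non-neighbours:
common neighbours come from the union bound, and the vertex adjacent to half of `A` from
double counting non-adjacent pairs. -/
lemma LinkProp.of_few_nonadj {V : Type*} [Fintype V] (G : SimpleGraph V) (R : Finset V)
    (B : ℕ) (y : ℝ) (hy0 : 0 ≤ y) (hy : ∀ v, ((R.filter fun r => ¬ G.Adj v r).card : ℝ) ≤ y)
    (hB : 2 * y + B < R.card) : LinkProp G R B where
  common U hU u v := by
    by_contra! hcon
    have hsub : R ⊆ U ∪ ((R.filter fun r => ¬ G.Adj u r) ∪ (R.filter fun r => ¬ G.Adj v r)) := by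
      intro r hr
      by_cases h1 : r ∈ U
      · simp [h1]
      by_cases h2 : G.Adj r u
      · have := hcon r hr h1 h2
        simp [hr, G.adj_comm v r, this]
      · simp [hr, G.adj_comm u r, h2]
    have h1 := (Finset.card_le_card hsub).trans ((Finset.card_union_le _ _).trans
      (Nat.add_le_add_left (Finset.card_union_le _ _) _))
    have h2 : (R.card : ℝ) ≤ U.card + ((R.filter fun r => ¬ G.Adj u r).card
      + (R.filter fun r => ¬ G.Adj v r).card) := by exact_mod_cast h1
    have h3 : (U.card : ℝ) ≤ B := by exact_mod_cast hU
    linarith [hy u, hy v]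
  halve U hU A := by
    have h3 : (U.card : ℝ) ≤ B := by exact_mod_cast hU
    have hc : (R.card : ℝ) ≤ U.card + (R \ U).card := by
      have : R.card ≤ U.card + (R \ U).card := by
        rw [add_comm]; exact Finset.card_le_card_sdiff_add_card
      exact_mod_cast this
    have hne : (R \ U).Nonempty := by
      rw [← Finset.card_pos]
      have : (0 : ℝ) < (R \ U).card := by linarith
      exact_mod_cast this
    have hsum : ∑ r ∈ R \ U, (2 * ((A.filter fun a => ¬ G.Adj r a).card : ℝ))
        ≤ ∑ r ∈ R \ U, (A.card : ℝ) := by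
      rw [← Finset.mul_sum, Finset.sum_const, nsmul_eq_mul]
      have : ∑ r ∈ R \ U, ((A.filter fun a => ¬ G.Adj r a).card : ℝ)
          = ∑ a ∈ A, (((R \ U).filter fun r => ¬ G.Adj a r).card : ℝ) := by
        simp only [Finset.card_filter]
        push_cast
        rw [Finset.sum_comm]
        simp only [G.adj_comm]
      rw [this]
      have h4 : ∑ a ∈ A, (((R \ U).filter fun r => ¬ G.Adj a r).card : ℝ) ≤ ∑ a ∈ A, y := by
        refine Finset.sum_le_sum fun a _ => le_trans ?_ (hy a)
        exact_mod_cast Finset.card_le_card (Finset.filter_subset_filter _ Finset.sdiff_subset)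
      rw [Finset.sum_const, nsmul_eq_mul] at h4
      have h5 : (A.card : ℝ) * (2 * y) ≤ A.card * (R \ U).card :=
        mul_le_mul_of_nonneg_left (by linarith) (Nat.cast_nonneg _)
      linarith
    obtain ⟨r, hr, h⟩ := Finset.exists_le_of_sum_le hne hsum
    rw [Finset.mem_sdiff] at hr
    refine ⟨r, hr.1, hr.2, A.filter fun a => ¬ G.Adj r a, Finset.filter_subset _ _, ?_, ?_⟩
    · intro a ha
      simp only [Finset.mem_sdiff, Finset.mem_filter, not_and, not_not] at ha
      exact ha.2 ha.1
    · exact_mod_cast h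

/-- A set with fewer than `2 ^ k` vertices becomes connected after adding at most `2 * k` unused
reserve vertices. Take `r` adjacent to at least half of the set, so that `r` and its neighbours
form a star; treat the remaining `A₀` recursively, and join the two parts by a common neighbour
`c` of `r` and of some vertex of `A₀`. -/
lemma LinkProp.connect {V : Type*} [DecidableEq V] {G : SimpleGraph V} {R : Finset V} {B : ℕ}
    (hR : LinkProp G R B) (k : ℕ) : ∀ A : Finset V, A.Nonempty → A.card < 2 ^ k →
      ∀ U : Finset V, U.card + 2 * k ≤ B → ∃ D ⊆ R, Disjoint D U ∧ D.card ≤ 2 * k ∧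
        (G.induce ((A ∪ D : Finset V) : Set V)).Connected := by
  induction k with
  | zero =>
    intro A hA h
    have := hA.card_pos
    omega
  | succ k ih =>
    intro A hA hAk U hU
    obtain ⟨r, hrR, hrU, A₀, hA₀, hadj, hcard⟩ := hR.halve U (by omega) A
    have hstar := connected_star r (A \ A₀) hadj
    rcases A₀.eq_empty_or_nonempty with h0 | h0
    · subst h0
      refine ⟨{r}, by simpa using hrR, by simpa using hrU, by simp; omega, ?_⟩
      exact connected_of_eq hstar (by ext x; simp)
    · obtain ⟨D, hDR, hDU, hDc, hD⟩ := ih A₀ h0 (by rw [pow_succ] at hAk; omega) (insert r U)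
        (by have := Finset.card_insert_le r U; omega)
      obtain ⟨a, ha⟩ := h0
      rw [Finset.disjoint_insert_right] at hDU
      obtain ⟨c, hcR, hc, hcr, hca⟩ := hR.common (insert r (U ∪ D))
        (by have := Finset.card_insert_le r (U ∪ D); have := Finset.card_union_le U D; omega) r a
      simp only [Finset.mem_insert, Finset.mem_union, not_or] at hc
      refine ⟨insert c (insert r D), ?_, ?_, ?_, ?_⟩
      · simp [Finset.insert_subset_iff, hcR, hrR, hDR]
      · simp [Finset.disjoint_insert_left, hc.2.1, hrU, hDU.2]
      · have := Finset.card_insert_le c (insert r D)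
        have := Finset.card_insert_le r D
        omega
      · have h1 := connected_insert hstar (Set.mem_insert r _) hcr.symm
        have h2 := connected_join h1 hD (Set.mem_insert c _) (v := a) (by simp [ha]) hca
        refine connected_of_eq h2 ?_
        ext x
        simp only [Finset.coe_union, Finset.coe_insert, Set.mem_union, Set.mem_insert_iff,
          Finset.mem_coe, Finset.mem_sdiff]
        have := @hA₀ x
        tauto

open Classical in
/-- Disjoint non-empty sets `A w` outside the reserve extend to the branch sets of a minor: each
one is made connected inside the reserve, then every ordered pair in `E`, the edges of `H` not
yet realised, is repaired by one further reserve vertex. -/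
lemma hasMinor_of_link {V W : Type*} [Fintype W] (G : SimpleGraph V)
    (H : SimpleGraph W) (R : Finset V) (B k : ℕ) (hR : LinkProp G R B) (A : W → Finset V)
    (hne : ∀ w, (A w).Nonempty) (hk : ∀ w, (A w).card < 2 ^ k)
    (hdis : Pairwise fun w w' => Disjoint (A w) (A w')) (hAR : ∀ w, Disjoint (A w) R)
    (E : Finset (W × W))
    (hE : ∀ w w', H.Adj w w' → (∃ u ∈ A w, ∃ v ∈ A w', G.Adj u v) ∨ (w, w') ∈ E)
    (hB : Fintype.card W * (2 * k) + E.card ≤ B) : HasMinor G H := by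
  -- `D w` collects the reserve vertices given to `w`; the sets of `s` are already connected.
  have step1 : ∀ s : Finset W, ∃ D : W → Finset V, (∀ w, D w ⊆ R) ∧
      (Pairwise fun w w' => Disjoint (D w) (D w')) ∧
      (Finset.univ.biUnion D).card ≤ s.card * (2 * k) ∧
      ∀ w ∈ s, (G.induce ((A w ∪ D w : Finset V) : Set V)).Connected := by
    intro s
    induction s using Finset.induction_on with
    | empty => exact ⟨fun _ => ∅, by simp, fun _ _ _ => by simp,
        by simp [Finset.card_eq_zero, Finset.eq_empty_iff_forall_notMem], by simp⟩
    | insert w₀ s hw₀ ih =>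
      obtain ⟨D, hD1, hD2, hD3, hD4⟩ := ih
      have hs : (insert w₀ s).card ≤ Fintype.card W := Finset.card_le_univ _
      rw [Finset.card_insert_of_notMem hw₀] at hs ⊢
      have hs' := Nat.mul_le_mul_right (2 * k) hs
      rw [add_mul, one_mul] at hs' ⊢
      obtain ⟨N, hN1, hN2, hN3, hN4⟩ := hR.connect k (A w₀) (hne w₀) (hk w₀)
        (Finset.univ.biUnion D) (by omega)
      rw [Finset.disjoint_biUnion_right] at hN2
      refine ⟨Function.update D w₀ N, ?_, ?_, ?_, ?_⟩
      · intro w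
        by_cases h : w = w₀
        · subst h; simpa using hN1
        · simpa [h] using hD1 w
      · intro w w' hww
        by_cases h : w = w₀
        · subst h
          simpa [Ne.symm hww] using hN2 w' (Finset.mem_univ _)
        · by_cases h' : w' = w₀
          · subst h'
            simpa [h] using (hN2 w (Finset.mem_univ _)).symm
          · simpa [h, h'] using hD2 hww
      · have : Finset.univ.biUnion (Function.update D w₀ N) ⊆ Finset.univ.biUnion D ∪ N := by
          intro x hx
          simp only [Finset.mem_biUnion, Finset.mem_univ, true_and, Finset.mem_union] at hx ⊢
          obtain ⟨w, hw⟩ := hx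
          by_cases h : w = w₀
          · subst h; right; simpa using hw
          · left; exact ⟨w, by simpa [h] using hw⟩
        have := (Finset.card_le_card this).trans (Finset.card_union_le _ _)
        omega
      · intro w hw
        by_cases h : w = w₀
        · subst h; exact connected_of_eq hN4 (by simp)
        · exact connected_of_eq (hD4 w (by simpa [h] using hw)) (by simp [h])
  -- All sets are connected and the pairs of `E'` are repaired.
  have step2 : ∀ E' ⊆ E, ∃ D : W → Finset V, (∀ w, D w ⊆ R) ∧
      (Pairwise fun w w' => Disjoint (D w) (D w')) ∧
      (Finset.univ.biUnion D).card ≤ Fintype.card W * (2 * k) + E'.card ∧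
      (∀ w, (G.induce ((A w ∪ D w : Finset V) : Set V)).Connected) ∧
      ∀ p ∈ E', ∃ u ∈ A p.1 ∪ D p.1, ∃ v ∈ A p.2, G.Adj u v := by
    intro E'
    induction E' using Finset.induction_on with
    | empty =>
      intro _
      obtain ⟨D, h1, h2, h3, h4⟩ := step1 Finset.univ
      exact ⟨D, h1, h2, by simpa using h3, fun w => h4 w (by simp), by simp⟩
    | insert p E' hp ih =>
      intro hsub
      have hs := Finset.card_le_card hsub
      rw [Finset.card_insert_of_notMem hp] at hs ⊢
      obtain ⟨D, hD1, hD2, hD3, hD4, hD5⟩ := ih ((Finset.subset_insert _ _).trans hsub)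
      obtain ⟨a, ha⟩ := hne p.1
      obtain ⟨b, hb⟩ := hne p.2
      obtain ⟨c, hcR, hc, hca, hcb⟩ := hR.common (Finset.univ.biUnion D) (by omega) a b
      simp only [Finset.mem_biUnion, Finset.mem_univ, true_and, not_exists] at hc
      have hgrow : ∀ w, D w ⊆ Function.update D p.1 (insert c (D p.1)) w := by
        intro w
        by_cases h : w = p.1
        · subst h; simp
        · simp [h]
      refine ⟨Function.update D p.1 (insert c (D p.1)), ?_, ?_, ?_, ?_, ?_⟩
      · intro w
        by_cases h : w = p.1
        · subst h; simpa [Finset.insert_subset_iff, hcR] using hD1 _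
        · simpa [h] using hD1 w
      · intro w w' hww
        by_cases h : w = p.1
        · subst h
          simpa [Ne.symm hww, hc w'] using hD2 hww
        · by_cases h' : w' = p.1
          · subst h'
            simpa [h, hc w] using hD2 hww
          · simpa [h, h'] using hD2 hww
      · have : Finset.univ.biUnion (Function.update D p.1 (insert c (D p.1)))
            ⊆ insert c (Finset.univ.biUnion D) := by
          intro x hx
          simp only [Finset.mem_biUnion, Finset.mem_univ, true_and, Finset.mem_insert] at hx ⊢
          obtain ⟨w, hw⟩ := hx
          by_cases h : w = p.1
          · subst h
            simp only [Function.update_self, Finset.mem_insert] at hw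
            exact hw.imp_right fun h => ⟨_, h⟩
          · right; exact ⟨w, by simpa [h] using hw⟩
        have := (Finset.card_le_card this).trans (Finset.card_insert_le _ _)
        omega
      · intro w
        by_cases h : w = p.1
        · subst h
          have := connected_insert (hD4 p.1) (u := a) (by simp [ha]) hca.symm
          exact connected_of_eq this (by simp)
        · exact connected_of_eq (hD4 w) (by simp [h])
      · intro q hq
        rw [Finset.mem_insert] at hq
        rcases hq with rfl | hq
        · exact ⟨c, by simp, b, hb, hcb⟩
        · obtain ⟨u, hu, v, hv, huv⟩ := hD5 q hq
          exact ⟨u, Finset.union_subset_union_right (hgrow _) hu, v, hv, huv⟩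
  obtain ⟨D, hD1, hD2, -, hD4, hD5⟩ := step2 E subset_rfl
  refine ⟨fun w => ((A w ∪ D w : Finset V) : Set V), fun w => ?_, hD4, ?_, ?_⟩
  · obtain ⟨a, ha⟩ := hne w
    exact ⟨a, by simp [ha]⟩
  · intro w w' hww
    rw [Finset.disjoint_coe, Finset.disjoint_union_left, Finset.disjoint_union_right,
      Finset.disjoint_union_right]
    exact ⟨⟨hdis hww, (hAR w).mono_right (hD1 w')⟩, ((hAR w').mono_right (hD1 w)).symm, hD2 hww⟩
  · intro w w' hww
    rcases hE w w' hww with ⟨u, hu, v, hv, h⟩ | h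
    · exact ⟨u, by simp [hu], v, by simp [hv], h⟩
    · obtain ⟨u, hu, v, hv, h⟩ := hD5 _ h
      exact ⟨u, by simpa using hu, v, by simp [hv], h⟩
/-! ### Counting permutations -/

open Classical in
/-- Exposing one more value of a random permutation. If the event `Q` and the set `D π` depend
only on the values of `π` on `S`, then given `Q` the value at `v ∉ S` is uniform among the
`|V| - |S|` values not taken on `S`, hence lies in `D π` with probability at most `c`. Counts of
permutations replace probabilities; uniformity is the invariance under `π ↦ π * swap u v`. -/
lemma perm_step {V : Type*} [Fintype V] (S : Finset V) (v : V) (hv : v ∉ S)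
    (Q : Equiv.Perm V → Prop) (D : Equiv.Perm V → Finset V)
    (hQ : ∀ π π' : Equiv.Perm V, (∀ u ∈ S, π u = π' u) → Q π → Q π')
    (hD : ∀ π π' : Equiv.Perm V, (∀ u ∈ S, π u = π' u) → D π = D π')
    (c : ℝ) (hx : ∀ π, Q π → ((D π).card : ℝ) ≤ c * (Fintype.card V - S.card)) :
    ((Finset.univ.filter fun π => Q π ∧ π v ∈ D π).card : ℝ)
      ≤ c * (Finset.univ.filter fun π => Q π).card := by
  have hswap : ∀ u ∈ Sᶜ, (Finset.univ.filter fun π => Q π ∧ π u ∈ D π).card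
      = (Finset.univ.filter fun π => Q π ∧ π v ∈ D π).card := by
    intro u hu
    have hu : u ∉ S := by simpa using hu
    have key : ∀ π : Equiv.Perm V, ∀ w ∈ S, π w = (π * Equiv.swap u v) w := by
      intro π w hw
      have h1 : w ≠ u := fun h => hu (h ▸ hw)
      have h2 : w ≠ v := fun h => hv (h ▸ hw)
      simp [Equiv.swap_apply_of_ne_of_ne h1 h2]
    refine Finset.card_bij' (fun π _ => π * Equiv.swap u v) (fun π _ => π * Equiv.swap u v)
      ?_ ?_ ?_ ?_
    · intro π hπ
      simp only [Finset.mem_filter, Finset.mem_univ, true_and] at hπ ⊢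
      refine ⟨hQ _ _ (key π) hπ.1, ?_⟩
      rw [← hD _ _ (key π)]
      simpa using hπ.2
    · intro π hπ
      simp only [Finset.mem_filter, Finset.mem_univ, true_and] at hπ ⊢
      refine ⟨hQ _ _ (key π) hπ.1, ?_⟩
      rw [← hD _ _ (key π)]
      simpa using hπ.2
    · intro π _
      simp [mul_assoc]
    · intro π _
      simp [mul_assoc]
  have hsum : Sᶜ.card * (Finset.univ.filter fun π => Q π ∧ π v ∈ D π).card
      = ∑ π ∈ Finset.univ.filter (fun π : Equiv.Perm V => Q π),
          (Sᶜ.filter fun u => π u ∈ D π).card := by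
    rw [← smul_eq_mul, ← Finset.sum_const, ← Finset.sum_congr rfl hswap]
    simp only [Finset.card_filter]
    rw [Finset.sum_filter, Finset.sum_comm]
    refine Finset.sum_congr rfl fun π _ => ?_
    by_cases h : Q π <;> simp [h]
  have hle : ∀ π ∈ Finset.univ.filter (fun π : Equiv.Perm V => Q π),
      ((Sᶜ.filter fun u => π u ∈ D π).card : ℝ) ≤ c * (Fintype.card V - S.card) := by
    intro π hπ
    refine le_trans ?_ (hx π (by simpa using hπ))
    exact_mod_cast Finset.card_le_card_of_injOn π (fun u hu => by
      simpa using (Finset.mem_filter.1 hu).2) π.injective.injOn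
  have hpos : (0 : ℝ) < Fintype.card V - S.card := by
    have : S.card < Fintype.card V := by
      rw [← Finset.card_univ]
      exact Finset.card_lt_card ⟨Finset.subset_univ _, fun h => hv (h (Finset.mem_univ v))⟩
    have : (S.card : ℝ) < Fintype.card V := by exact_mod_cast this
    linarith
  have h1 := Finset.sum_le_card_nsmul _ _ _ hle
  have h2 : (Sᶜ.card : ℝ) = Fintype.card V - S.card := by
    rw [Finset.card_compl, Nat.cast_sub (Finset.card_le_univ S)]
  rw [← Nat.cast_sum, ← hsum, nsmul_eq_mul, Nat.cast_mul, h2] at h1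
  refine le_of_mul_le_mul_left (h1.trans_eq ?_) hpos
  ring

open Classical in
/-- Iteration of `perm_step` over a block `T` of positions: given `Q`, all of `T` is mapped into
`D π` with probability at most `c ^ |T|`. -/
lemma perm_block {V : Type*} [Fintype V] (S : Finset V)
    (Q : Equiv.Perm V → Prop) (D : Equiv.Perm V → Finset V)
    (hQ : ∀ π π' : Equiv.Perm V, (∀ u ∈ S, π u = π' u) → Q π → Q π')
    (hD : ∀ π π' : Equiv.Perm V, (∀ u ∈ S, π u = π' u) → D π = D π')
    (c : ℝ) (hc : 0 ≤ c) (N : ℝ) (hx : ∀ π, Q π → ((D π).card : ℝ) ≤ c * N)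
    (T : Finset V) (hST : Disjoint S T) (hN : N + S.card + T.card ≤ Fintype.card V) :
    ((Finset.univ.filter fun π => Q π ∧ ∀ v ∈ T, π v ∈ D π).card : ℝ)
      ≤ c ^ T.card * (Finset.univ.filter fun π => Q π).card := by
  induction T using Finset.induction_on with
  | empty => simp
  | insert v T hvT ih =>
    rw [Finset.disjoint_insert_right] at hST
    rw [Finset.card_insert_of_notMem hvT] at hN ⊢
    push_cast at hN
    have ih := ih hST.2 (by linarith)
    have hv : v ∉ S ∪ T := by simp [hST.1, hvT]
    have h := perm_step (S ∪ T) v hv (fun π => Q π ∧ ∀ v ∈ T, π v ∈ D π) D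
      (fun π π' h hπ => ⟨hQ π π' (fun u hu => h u (by simp [hu])) hπ.1, fun u hu => by
        rw [← h u (by simp [hu]), ← hD π π' (fun u hu => h u (by simp [hu]))]
        exact hπ.2 u hu⟩)
      (fun π π' h => hD π π' (fun u hu => h u (by simp [hu]))) c
      (fun π hπ => (hx π hπ.1).trans (mul_le_mul_of_nonneg_left (by
        rw [Finset.card_union_of_disjoint hST.2]; push_cast; linarith) hc))
    rw [pow_succ', mul_assoc]
    refine le_trans (le_of_eq ?_) (h.trans (mul_le_mul_of_nonneg_left
      (le_trans (le_of_eq ?_) ih) hc))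
    all_goals
      congr 2
      ext π
    rotate_left
    · simp only [Finset.mem_filter, Finset.mem_univ, true_and]
    simp only [Finset.mem_filter, Finset.mem_univ, true_and, Finset.forall_mem_insert]
    tauto

open Classical in
lemma perm_block_const {V : Type*} [Fintype V] (X T : Finset V) (c : ℝ) (hc : 0 ≤ c)
    (hx : (X.card : ℝ) ≤ c * (Fintype.card V - T.card)) :
    ((Finset.univ.filter fun π : Equiv.Perm V => ∀ v ∈ T, π v ∈ X).card : ℝ)
      ≤ c ^ T.card * Fintype.card (Equiv.Perm V) := by
  have := perm_block ∅ (fun _ => True) (fun _ => X) (by simp) (by simp) c hc _ (fun _ _ => hx) T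
    (by simp) (by simp)
  simpa using this

open Classical in
/-- Some permutation sends at most the average number of the ordered pairs `E` into the relation
`F`: a random permutation sends each pair to a uniform off-diagonal pair. -/
lemma exists_perm_pairs {I : Type*} [Fintype I] [DecidableEq I] (F : I → I → Prop)
    (E : Finset (I × I))
    (hE : ∀ p ∈ E, p.1 ≠ p.2) :
    ∃ π : Equiv.Perm I, (E.filter fun p => F (π p.1) (π p.2)).card
        * (Fintype.card I * (Fintype.card I - 1))
      ≤ E.card * (Finset.univ.filter fun p : I × I => p.1 ≠ p.2 ∧ F p.1 p.2).card := by
  set O : Finset (I × I) := Finset.univ.filter fun p : I × I => p.1 ≠ p.2 with hO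
  have hOc : O.card = Fintype.card I * (Fintype.card I - 1) := by
    have : O = Finset.univ.offDiag := by ext p; simp [hO]
    rw [this, Finset.offDiag_card, Finset.card_univ, Nat.mul_sub, mul_one]
  have hconst : ∀ p ∈ O, ∀ p' ∈ O,
      (Finset.univ.filter fun π : Equiv.Perm I => F (π p.1) (π p.2)).card
      = (Finset.univ.filter fun π : Equiv.Perm I => F (π p'.1) (π p'.2)).card := by
    rintro ⟨a, b⟩ hp ⟨a', b'⟩ hp'
    simp only [hO, Finset.mem_filter, Finset.mem_univ, true_and] at hp hp' ⊢
    obtain ⟨σ, h1, h2⟩ : ∃ σ : Equiv.Perm I, σ a = a' ∧ σ b = b' := by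
      refine ⟨Equiv.swap (Equiv.swap a a' b) b' * Equiv.swap a a', ?_, by simp⟩
      simp only [Equiv.Perm.mul_apply, Equiv.swap_apply_left]
      refine Equiv.swap_apply_of_ne_of_ne ?_ hp'
      intro h
      apply hp
      have := congrArg (Equiv.swap a a') h
      simpa using this
    refine Finset.card_bij' (fun π _ => π * σ⁻¹) (fun π _ => π * σ) ?_ ?_ ?_ ?_
    · intro π hπ
      have e1 : σ.symm a' = a := by rw [← h1]; simp
      have e2 : σ.symm b' = b := by rw [← h2]; simp
      simpa [e1, e2] using hπ
    · intro π hπ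
      simpa [h1, h2] using hπ
    · intro π _; simp
    · intro π _; simp
  have hsumO : ∀ p ∈ O, O.card *
      (Finset.univ.filter fun π : Equiv.Perm I => F (π p.1) (π p.2)).card
      = Fintype.card (Equiv.Perm I) *
        (Finset.univ.filter fun p : I × I => p.1 ≠ p.2 ∧ F p.1 p.2).card := by
    intro p hp
    rw [← smul_eq_mul, ← Finset.sum_const, Finset.sum_congr rfl (fun p' hp' => hconst p hp p' hp')]
    simp only [Finset.card_filter]
    rw [Finset.sum_comm, ← Finset.card_univ, ← smul_eq_mul, ← Finset.sum_const]
    refine Finset.sum_congr rfl fun π _ => ?_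
    rw [hO, Finset.sum_filter]
    refine Finset.sum_bij' (fun p _ => (π p.1, π p.2)) (fun p _ => (π.symm p.1, π.symm p.2))
      ?_ ?_ ?_ ?_ ?_
    · simp
    · simp
    · simp
    · simp
    · intro q _
      by_cases h : q.1 = q.2 <;> simp [h]
  have htot : ∑ π : Equiv.Perm I, (E.filter fun p => F (π p.1) (π p.2)).card * O.card
      = ∑ π : Equiv.Perm I,
        E.card * (Finset.univ.filter fun p : I × I => p.1 ≠ p.2 ∧ F p.1 p.2).card := by
    rw [← Finset.sum_mul, Finset.sum_const, Finset.card_univ, smul_eq_mul]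
    have : ∑ π : Equiv.Perm I, (E.filter fun p => F (π p.1) (π p.2)).card
        = ∑ p ∈ E, (Finset.univ.filter fun π : Equiv.Perm I => F (π p.1) (π p.2)).card := by
      simp only [Finset.card_filter]
      rw [Finset.sum_comm]
    have h2 : ∀ p ∈ E, (Finset.univ.filter fun π : Equiv.Perm I => F (π p.1) (π p.2)).card
        * O.card = Fintype.card (Equiv.Perm I) *
        (Finset.univ.filter fun p : I × I => p.1 ≠ p.2 ∧ F p.1 p.2).card := fun p hp => by
      rw [mul_comm]; exact hsumO p (by simp [hO, hE p hp])
    rw [this, Finset.sum_mul, Finset.sum_congr rfl h2]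
    simp only [Finset.sum_const, smul_eq_mul]
    ring
  obtain ⟨π, -, hπ⟩ := Finset.exists_le_of_sum_le Finset.univ_nonempty htot.le
  exact ⟨π, hOc ▸ hπ⟩

open Classical in
/-- Markov's inequality for the counting measure. -/
lemma markov_count {α : Type*} [Fintype α] (f : α → ℝ) (hf : ∀ x, 0 ≤ f x) (K : ℝ) :
    ((Finset.univ.filter fun x => K < f x).card : ℝ) * K ≤ ∑ x, f x := by
  calc _ = ∑ x ∈ Finset.univ.filter (fun x => K < f x), K := by simp
    _ ≤ ∑ x ∈ Finset.univ.filter (fun x => K < f x), f x :=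
        Finset.sum_le_sum fun x hx => (Finset.mem_filter.1 hx).2.le
    _ ≤ ∑ x, f x := Finset.sum_le_sum_of_subset_of_nonneg (Finset.filter_subset _ _)
        fun x _ _ => hf x

/-- The bound `(m choose s) / (y choose s) ≤ (m / (y - s)) ^ s`, cleared of denominators and with
truncated subtraction. -/
lemma choose_mul_pow_le (m y s : ℕ) :
    m.choose s * (y - s) ^ s ≤ m ^ s * y.choose s := by
  have h1 := Nat.descFactorial_le_pow m s
  rw [Nat.descFactorial_eq_factorial_mul_choose] at h1
  have h2 : (y - s) ^ s ≤ s.factorial * y.choose s := by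
    rw [← Nat.descFactorial_eq_factorial_mul_choose]
    exact (Nat.pow_le_pow_left (by omega) s).trans (Nat.pow_sub_le_descFactorial y s)
  have h3 := Nat.mul_le_mul h1 h2
  refine Nat.le_of_mul_le_mul_left ?_ (Nat.factorial_pos s)
  calc _ = s.factorial * m.choose s * (y - s) ^ s := by ring
    _ ≤ _ := h3
    _ = _ := by ring

open Classical in
/-- Upper tail for the number of positions in `R₀` that a random permutation maps into `X`: if
that number is at least `y`, then at least `y.choose s` of the `s`-subsets of `R₀` are mapped
into `X`, while each such subset is so with probability at most `c ^ s`. -/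
lemma count_many_nonadj {V : Type*} [Fintype V] (X R₀ : Finset V) (s y : ℕ)
    (c θ : ℝ) (hc : 0 ≤ c) (hX : (X.card : ℝ) ≤ c * (Fintype.card V - s)) (hsy : s < y)
    (hθ : c * R₀.card ≤ θ * ((y : ℝ) - s)) :
    ((Finset.univ.filter fun π : Equiv.Perm V => y ≤ (R₀.filter fun r => π r ∈ X).card).card : ℝ)
      ≤ θ ^ s * Fintype.card (Equiv.Perm V) := by
  set m := R₀.card with hm
  set N : ℝ := ((Fintype.card (Equiv.Perm V) : ℕ) : ℝ) with hN
  set b := (Finset.univ.filter fun π : Equiv.Perm V =>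
    y ≤ (R₀.filter fun r => π r ∈ X).card).card with hb
  have h1 : b * y.choose s ≤ ∑ π : Equiv.Perm V, ((R₀.filter fun r => π r ∈ X).card).choose s := by
    calc _ = ∑ π ∈ Finset.univ.filter (fun π : Equiv.Perm V =>
          y ≤ (R₀.filter fun r => π r ∈ X).card), y.choose s := by simp [hb]
      _ ≤ ∑ π ∈ Finset.univ.filter (fun π : Equiv.Perm V =>
          y ≤ (R₀.filter fun r => π r ∈ X).card), ((R₀.filter fun r => π r ∈ X).card).choose s :=
        Finset.sum_le_sum fun x hx => Nat.choose_le_choose s (Finset.mem_filter.1 hx).2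
      _ ≤ _ := Finset.sum_le_sum_of_subset (Finset.filter_subset _ _)
  have h2 : ∑ π : Equiv.Perm V, ((R₀.filter fun r => π r ∈ X).card).choose s
      = ∑ S ∈ R₀.powersetCard s,
        (Finset.univ.filter fun π : Equiv.Perm V => ∀ r ∈ S, π r ∈ X).card := by
    simp only [Finset.card_filter (fun π : Equiv.Perm V => _)]
    rw [Finset.sum_comm]
    refine Finset.sum_congr rfl fun π _ => ?_
    rw [← Finset.card_powersetCard, ← Finset.card_filter]
    congr 1
    ext S
    simp only [Finset.mem_powersetCard, Finset.mem_filter, Finset.subset_iff]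
    constructor
    · rintro ⟨h, h'⟩
      exact ⟨⟨fun x hx => (h hx).1, h'⟩, fun x hx => (h hx).2⟩
    · rintro ⟨⟨h, h'⟩, h''⟩
      exact ⟨fun x hx => ⟨h hx, h'' x hx⟩, h'⟩
  have h3 : (∑ S ∈ R₀.powersetCard s,
        ((Finset.univ.filter fun π : Equiv.Perm V => ∀ r ∈ S, π r ∈ X).card : ℝ))
      ≤ m.choose s * (c ^ s * N) := by
    rw [hm, ← Finset.card_powersetCard, ← nsmul_eq_mul]
    refine Finset.sum_le_card_nsmul _ _ _ fun S hS => ?_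
    have hS := (Finset.mem_powersetCard.1 hS).2
    have := perm_block_const X S c hc (by rw [hS]; exact hX)
    rwa [hS] at this
  have h4 : (b : ℝ) * y.choose s ≤ m.choose s * (c ^ s * N) := by
    refine le_trans ?_ h3
    rw [h2] at h1
    exact_mod_cast h1
  have hys : (0 : ℝ) < (y : ℝ) - s := by
    have : (s : ℝ) < y := by exact_mod_cast hsy
    linarith
  have h5 : (m.choose s : ℝ) * ((y : ℝ) - s) ^ s ≤ (m : ℝ) ^ s * y.choose s := by
    rw [← Nat.cast_sub hsy.le]
    exact_mod_cast choose_mul_pow_le m y s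
  have hN0 : 0 ≤ N := Nat.cast_nonneg _
  have hch : (0 : ℝ) < y.choose s := by exact_mod_cast Nat.choose_pos hsy.le
  have h6 : (c * m) ^ s ≤ θ ^ s * ((y : ℝ) - s) ^ s := by
    rw [← mul_pow]
    exact pow_le_pow_left₀ (by positivity) hθ s
  have hp : 0 < (y.choose s : ℝ) * ((y : ℝ) - s) ^ s := by positivity
  refine le_of_mul_le_mul_right ?_ hp
  calc (b : ℝ) * (y.choose s * ((y : ℝ) - s) ^ s)
      = (b * y.choose s) * ((y : ℝ) - s) ^ s := by ring
    _ ≤ (m.choose s * (c ^ s * N)) * ((y : ℝ) - s) ^ s := by gcongr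
    _ = (m.choose s * ((y : ℝ) - s) ^ s) * (c ^ s * N) := by ring
    _ ≤ ((m : ℝ) ^ s * y.choose s) * (c ^ s * N) := by gcongr
    _ = (c * m) ^ s * (N * y.choose s) := by rw [mul_pow]; ring
    _ ≤ (θ ^ s * ((y : ℝ) - s) ^ s) * (N * y.choose s) := by gcongr
    _ = _ := by ring

/-! ### Random blocks -/

open Classical in
/-- The vertices with no neighbour in `A`. Adjacency is irreflexive, so a vertex of `A` isolated
in `A` belongs to this set; in particular `v ∈ commonNonNbrs G {v}`. -/
noncomputable def commonNonNbrs {V : Type*} [Fintype V] (G : SimpleGraph V) (A : Finset V) :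
    Finset V := Finset.univ.filter fun v => ∀ u ∈ A, ¬ G.Adj v u

open Classical in
/-- Few random blocks are bad. A vertex has no neighbour in a random block of size `l` with
probability at most `c ^ l`; Markov's inequality is applied to the number of such vertices for
one block (threshold `B`), and then to the number of bad blocks (threshold `K`). -/
lemma count_bad {V ι : Type*} [Fintype V] [Fintype ι] (G : SimpleGraph V) (P : ι → Finset V)
    (l : ℕ) (hP : ∀ i, (P i).card = l) (c : ℝ) (hc : 0 ≤ c)
    (hG : ∀ v, ((commonNonNbrs G {v}).card : ℝ) ≤ c * (Fintype.card V - l))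
    (B K : ℝ) (hB : 0 ≤ B) :
    ((Finset.univ.filter fun π : Equiv.Perm V => K <
        (Finset.univ.filter fun i => B < (commonNonNbrs G ((P i).image π)).card).card).card : ℝ)
      * K * B ≤ Fintype.card ι * Fintype.card V * c ^ l * Fintype.card (Equiv.Perm V) := by
  have h1 := markov_count (fun π : Equiv.Perm V =>
    ((Finset.univ.filter fun i => B < (commonNonNbrs G ((P i).image π)).card).card : ℝ))
    (fun _ => Nat.cast_nonneg _) K
  have h2 : (∑ π : Equiv.Perm V,
      ((Finset.univ.filter fun i => B < (commonNonNbrs G ((P i).image π)).card).card : ℝ))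
      = ∑ i, ((Finset.univ.filter fun π : Equiv.Perm V =>
        B < (commonNonNbrs G ((P i).image π)).card).card : ℝ) := by
    simp only [Finset.card_filter]
    push_cast
    rw [Finset.sum_comm]
  have h3 : ∀ i, ((Finset.univ.filter fun π : Equiv.Perm V =>
        B < (commonNonNbrs G ((P i).image π)).card).card : ℝ) * B
      ≤ Fintype.card V * (c ^ l * Fintype.card (Equiv.Perm V)) := by
    intro i
    have h4 := markov_count (fun π : Equiv.Perm V =>
      ((commonNonNbrs G ((P i).image π)).card : ℝ)) (fun _ => Nat.cast_nonneg _) B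
    refine h4.trans ?_
    have h5 : (∑ π : Equiv.Perm V, ((commonNonNbrs G ((P i).image π)).card : ℝ))
        = ∑ v, ((Finset.univ.filter fun π : Equiv.Perm V =>
          ∀ u ∈ P i, π u ∈ commonNonNbrs G {v}).card : ℝ) := by
      simp only [commonNonNbrs, Finset.card_filter]
      push_cast
      rw [Finset.sum_comm]
      simp [G.adj_comm]
    rw [h5, ← Finset.card_univ, ← nsmul_eq_mul]
    refine Finset.sum_le_card_nsmul _ _ _ fun v _ => ?_
    have := perm_block_const (commonNonNbrs G {v}) (P i) c hc (by rw [hP]; exact hG v)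
    rwa [hP] at this
  calc _ ≤ _ := mul_le_mul_of_nonneg_right (h1.trans_eq h2) hB
    _ = _ := Finset.sum_mul _ _ _
    _ ≤ _ := Finset.sum_le_card_nsmul _ _ _ fun i _ => h3 i
    _ = _ := by rw [nsmul_eq_mul, Finset.card_univ]; ring

open Classical in
/-- Few pairs of random blocks have no edge between them when the first block is good, i.e. has
at most `B` vertices without a neighbour in it: given the first block, the second falls entirely
into that exceptional set with probability at most `c ^ l`. -/
lemma count_fail {V ι : Type*} [Fintype V] [Fintype ι] [DecidableEq ι]
    (G : SimpleGraph V) (P : ι → Finset V)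
    (l : ℕ) (hP : ∀ i, (P i).card = l) (hdis : Pairwise fun i j => Disjoint (P i) (P j))
    (c : ℝ) (hc : 0 ≤ c)
    (B K : ℝ) (hB : B ≤ c * (Fintype.card V - 2 * l)) :
    ((Finset.univ.filter fun π : Equiv.Perm V => K <
        (Finset.univ.filter fun p : ι × ι => p.1 ≠ p.2 ∧
          ((commonNonNbrs G ((P p.1).image π)).card : ℝ) ≤ B ∧
          ∀ u ∈ P p.2, π u ∈ commonNonNbrs G ((P p.1).image π)).card).card : ℝ)
      * K ≤ (Fintype.card ι : ℝ) ^ 2 * c ^ l * Fintype.card (Equiv.Perm V) := by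
  have h1 := markov_count (fun π : Equiv.Perm V =>
    ((Finset.univ.filter fun p : ι × ι => p.1 ≠ p.2 ∧
          ((commonNonNbrs G ((P p.1).image π)).card : ℝ) ≤ B ∧
          ∀ u ∈ P p.2, π u ∈ commonNonNbrs G ((P p.1).image π)).card : ℝ))
    (fun _ => Nat.cast_nonneg _) K
  refine h1.trans ?_
  have h2 : (∑ π : Equiv.Perm V, ((Finset.univ.filter fun p : ι × ι => p.1 ≠ p.2 ∧
          ((commonNonNbrs G ((P p.1).image π)).card : ℝ) ≤ B ∧
          ∀ u ∈ P p.2, π u ∈ commonNonNbrs G ((P p.1).image π)).card : ℝ))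
      = ∑ p : ι × ι, ((Finset.univ.filter fun π : Equiv.Perm V => p.1 ≠ p.2 ∧
          ((commonNonNbrs G ((P p.1).image π)).card : ℝ) ≤ B ∧
          ∀ u ∈ P p.2, π u ∈ commonNonNbrs G ((P p.1).image π)).card : ℝ) := by
    simp only [Finset.card_filter]
    push_cast
    rw [Finset.sum_comm]
  have h3 : ∀ p : ι × ι, ((Finset.univ.filter fun π : Equiv.Perm V => p.1 ≠ p.2 ∧
          ((commonNonNbrs G ((P p.1).image π)).card : ℝ) ≤ B ∧
          ∀ u ∈ P p.2, π u ∈ commonNonNbrs G ((P p.1).image π)).card : ℝ)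
      ≤ c ^ l * Fintype.card (Equiv.Perm V) := by
    rintro ⟨i, j⟩
    by_cases hij : i = j
    · simp only [hij, ne_eq, not_true, false_and, Finset.filter_false, Finset.card_empty,
        Nat.cast_zero]
      positivity
    have himg : ∀ π π' : Equiv.Perm V, (∀ u ∈ P i, π u = π' u) →
        (P i).image π = (P i).image π' := fun π π' h => Finset.image_congr fun u hu => h u hu
    have := perm_block (P i)
      (fun π => ((commonNonNbrs G ((P i).image π)).card : ℝ) ≤ B)
      (fun π => commonNonNbrs G ((P i).image π))
      (fun π π' h hπ => by rw [← himg π π' h]; exact hπ)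
      (fun π π' h => by rw [himg π π' h]) c hc (Fintype.card V - 2 * l)
      (fun π hπ => hπ.trans hB) (P j) (hdis hij) (by rw [hP, hP]; linarith)
    rw [hP] at this
    calc _ ≤ _ := by
          refine le_of_eq ?_
          congr 2
          ext π
          simp [hij]
      _ ≤ _ := this
      _ ≤ _ := by
          gcongr
          exact Finset.card_le_univ _
  rw [h2]
  calc _ ≤ _ := Finset.sum_le_card_nsmul _ _ _ fun p _ => h3 p
    _ = _ := by
      rw [nsmul_eq_mul, Finset.card_univ, Fintype.card_prod]; push_cast; ring

open Classical in
/-- One permutation with three properties, each of which fails with probability at most `1 / 4`: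
every vertex has few non-neighbours in the reserve, few blocks are bad, and few pairs of blocks
with the first one good have no edge between them. -/
lemma exists_good_perm {V : Type*} [Fintype V] (G : SimpleGraph V) (n s y l M : ℕ)
    (hn : n = Fintype.card V) (R₀ : Finset V) (P : Fin M → Finset V)
    (hP : ∀ i, (P i).card = l) (hdis : Pairwise fun i j => Disjoint (P i) (P j))
    (p₀ p₁ p₂ cA θ δ c : ℝ) (hn0 : 0 < n) (hM0 : 0 < M)
    (hdeg : ∀ v, ((commonNonNbrs G {v}).card : ℝ) ≤ p₀ * n)
    (hcA0 : 0 ≤ cA) (hcA : p₀ * n ≤ cA * (n - s)) (hsy : s < y)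
    (hθ : cA * R₀.card ≤ θ * ((y : ℝ) - s)) (hθn : n * θ ^ s ≤ 1 / 4)
    (hp₁ : 0 ≤ p₁) (hp₂ : 0 < p₂) (hp₁n : p₀ * n ≤ p₁ * (n - l)) (hδ : 0 < δ)
    (hpp : p₁ ^ l ≤ δ / 4 * p₂ ^ l) (hc : 0 < c) (hcn : p₂ ^ l * n ≤ c * (n - 2 * l)) :
    ∃ π : Equiv.Perm V,
      (∀ v, (R₀.filter fun r => π r ∈ commonNonNbrs G {v}).card < y) ∧
      ((Finset.univ.filter fun i =>
        p₂ ^ l * n < (commonNonNbrs G ((P i).image π)).card).card : ℝ) ≤ δ * M ∧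
      ((Finset.univ.filter fun p : Fin M × Fin M => p.1 ≠ p.2 ∧
          ((commonNonNbrs G ((P p.1).image π)).card : ℝ) ≤ p₂ ^ l * n ∧
          ∀ u ∈ P p.2, π u ∈ commonNonNbrs G ((P p.1).image π)).card : ℝ)
        ≤ 4 * c ^ l * (M : ℝ) ^ 2 := by
  set N : ℝ := ((Fintype.card (Equiv.Perm V) : ℕ) : ℝ) with hN
  have hN0 : 0 < N := by rw [hN]; exact_mod_cast Fintype.card_pos
  have hnR : (0 : ℝ) < n := by exact_mod_cast hn0
  have hMR : (0 : ℝ) < M := by exact_mod_cast hM0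
  set Ba := Finset.univ.filter fun π : Equiv.Perm V =>
    ∃ v, y ≤ (R₀.filter fun r => π r ∈ commonNonNbrs G {v}).card with hBa
  set Bb := Finset.univ.filter fun π : Equiv.Perm V => δ * M <
    ((Finset.univ.filter fun i =>
        p₂ ^ l * n < (commonNonNbrs G ((P i).image π)).card).card : ℝ) with hBb
  set Bc := Finset.univ.filter fun π : Equiv.Perm V => 4 * c ^ l * (M : ℝ) ^ 2 <
    ((Finset.univ.filter fun p : Fin M × Fin M => p.1 ≠ p.2 ∧
          ((commonNonNbrs G ((P p.1).image π)).card : ℝ) ≤ p₂ ^ l * n ∧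
          ∀ u ∈ P p.2, π u ∈ commonNonNbrs G ((P p.1).image π)).card : ℝ) with hBc
  have ha : (Ba.card : ℝ) ≤ 1 / 4 * N := by
    have h1 : Ba ⊆ Finset.univ.biUnion fun v => Finset.univ.filter fun π : Equiv.Perm V =>
        y ≤ (R₀.filter fun r => π r ∈ commonNonNbrs G {v}).card := by
      intro π hπ
      simpa [hBa] using hπ
    have h2 := (Finset.card_le_card h1).trans Finset.card_biUnion_le
    have h3 : (Ba.card : ℝ) ≤ ∑ v, ((Finset.univ.filter fun π : Equiv.Perm V =>
        y ≤ (R₀.filter fun r => π r ∈ commonNonNbrs G {v}).card).card : ℝ) := by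
      exact_mod_cast h2
    refine h3.trans ?_
    refine (Finset.sum_le_card_nsmul _ _ (θ ^ s * N) fun v _ => ?_).trans ?_
    · exact count_many_nonadj _ R₀ s y cA θ hcA0 (by rw [← hn]; exact (hdeg v).trans hcA) hsy hθ
    · rw [nsmul_eq_mul, Finset.card_univ, ← hn, ← mul_assoc]
      gcongr
  have hb : (Bb.card : ℝ) ≤ 1 / 4 * N := by
    have h := count_bad G P l hP p₁ hp₁ (by rw [← hn]; exact fun v => (hdeg v).trans hp₁n)
      (p₂ ^ l * n) (δ * M) (by positivity)
    rw [Fintype.card_fin, ← hn] at h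
    have hpos : 0 < δ * M * (p₂ ^ l * n) := by positivity
    refine le_of_mul_le_mul_right ?_ hpos
    calc _ = Bb.card * (δ * M) * (p₂ ^ l * n) := by ring
      _ ≤ _ := h
      _ ≤ M * n * (δ / 4 * p₂ ^ l) * N := by gcongr
      _ = _ := by ring
  have hcc : (Bc.card : ℝ) ≤ 1 / 4 * N := by
    have h := count_fail G P l hP hdis c hc.le (p₂ ^ l * n) (4 * c ^ l * (M : ℝ) ^ 2)
      (by rw [← hn]; exact hcn)
    rw [Fintype.card_fin] at h
    have hpos : 0 < 4 * c ^ l * (M : ℝ) ^ 2 := by positivity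
    refine le_of_mul_le_mul_right (h.trans_eq ?_) hpos
    ring
  have hex : ∃ π, π ∉ Ba ∪ (Bb ∪ Bc) := by
    by_contra! hcon
    have h1 : (Finset.univ : Finset (Equiv.Perm V)) ⊆ Ba ∪ (Bb ∪ Bc) := fun π _ => hcon π
    have h2 := (Finset.card_le_card h1).trans ((Finset.card_union_le _ _).trans
      (Nat.add_le_add_left (Finset.card_union_le _ _) _))
    rw [Finset.card_univ] at h2
    have h3 : N ≤ Ba.card + (Bb.card + Bc.card) := by rw [hN]; exact_mod_cast h2
    linarith
  obtain ⟨π, hπ⟩ := hex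
  simp only [Finset.mem_union, not_or, hBa, hBb, hBc, Finset.mem_filter, Finset.mem_univ,
    true_and, not_exists, not_le, not_lt] at hπ
  exact ⟨π, hπ.1, hπ.2.1, hπ.2.2⟩

/-- Disjoint sets of positions for the reserve and for the `M` blocks of size `l`. -/
lemma exists_blocks {V : Type*} [Fintype V] (m M l : ℕ) (h : m + M * l ≤ Fintype.card V) :
    ∃ (R₀ : Finset V) (P : Fin M → Finset V), R₀.card = m ∧ (∀ i, (P i).card = l) ∧
      (Pairwise fun i j => Disjoint (P i) (P j)) ∧ ∀ i, Disjoint (P i) R₀ := by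
  classical
  have : Nonempty ((Fin m ⊕ (Fin M × Fin l)) ↪ V) :=
    Function.Embedding.nonempty_of_card_le (by simpa using h)
  obtain ⟨e⟩ := this
  refine ⟨Finset.univ.map (Function.Embedding.inl.trans e),
    fun i => Finset.univ.map
      (((Function.Embedding.sectR i (Fin l)).trans Function.Embedding.inr).trans e),
    by simp, by simp, ?_, ?_⟩
  · intro i j hij
    simp [Finset.disjoint_left, Ne.symm hij]
  · intro i
    simp [Finset.disjoint_left]

open Classical in
/-- The whole argument, with its numerical requirements as hypotheses. Here `l` is the block size,
`m` the size of the reserve, `M` the number of blocks, and `y` bounds the number of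
non-neighbours of a vertex in the reserve. -/
lemma hasMinor_core {V W : Type*} [Fintype V] [Fintype W] (G : SimpleGraph V) (H : SimpleGraph W)
    (n t s y l m M k : ℕ)
    (hn : n = Fintype.card V) (ht : t = Fintype.card W) (hmM : m + M * l ≤ n)
    (p₀ p₁ p₂ cA θ δ c : ℝ) (hn0 : 0 < n) (ht2 : 2 ≤ t) (hl : 0 < l) (hlk : l < 2 ^ k)
    (hdeg : ∀ v, ((commonNonNbrs G {v}).card : ℝ) ≤ p₀ * n)
    (hcA0 : 0 ≤ cA) (hcA : p₀ * n ≤ cA * (n - s)) (hsy : s < y)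
    (hθ : cA * m ≤ θ * ((y : ℝ) - s)) (hθn : n * θ ^ s ≤ 1 / 4)
    (hp₁ : 0 ≤ p₁) (hp₂ : 0 < p₂) (hp₁n : p₀ * n ≤ p₁ * (n - l)) (hδ : 0 < δ)
    (hpp : p₁ ^ l ≤ δ / 4 * p₂ ^ l) (hc : 0 < c) (hcn : p₂ ^ l * n ≤ c * (n - 2 * l))
    (htM : (t : ℝ) ≤ (1 - δ) * M) (hym : 2 * y + (t * (2 * k) + t) < m)
    (hE : ((Finset.univ.filter fun p : W × W => H.Adj p.1 p.2).card : ℝ)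
      * (4 * c ^ l * (M : ℝ) ^ 2) ≤ t * (t * (t - 1))) : HasMinor G H := by
  have ht2R : (2 : ℝ) ≤ t := by exact_mod_cast ht2
  have hM0 : 0 < M := by
    rcases Nat.eq_zero_or_pos M with h | h
    · subst h; simp at htM; linarith
    · exact h
  obtain ⟨R₀, P, hR₀, hP, hPdis, hPR⟩ := exists_blocks m M l (hn ▸ hmM)
  obtain ⟨π, h1, h2, h3⟩ := exists_good_perm G n s y l M hn R₀ P hP hPdis p₀ p₁ p₂ cA θ δ c hn0
    hM0 hdeg hcA0 hcA hsy (by rw [hR₀]; exact hθ) hθn hp₁ hp₂ hp₁n hδ hpp hc hcn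
  set X : Fin M → Finset V := fun i => commonNonNbrs G ((P i).image π) with hX
  -- The good blocks; at least `t` of them remain.
  let I := {i : Fin M // ((X i).card : ℝ) ≤ p₂ ^ l * n}
  have hIcard : t ≤ Fintype.card I := by
    have hsplit : (Finset.univ.filter fun i => p₂ ^ l * n < ((X i).card : ℝ)).card
        + Fintype.card I = M := by
      have := Finset.card_filter_add_card_filter_not (s := Finset.univ)
          (fun i => p₂ ^ l * n < ((X i).card : ℝ))
      simp only [not_lt, Fintype.card_fin, Finset.card_univ] at this
      rw [Fintype.card_subtype]
      exact this
    have hsplit' : ((Finset.univ.filter fun i => p₂ ^ l * n < ((X i).card : ℝ)).card : ℝ)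
        + Fintype.card I = M := by exact_mod_cast hsplit
    have : (t : ℝ) ≤ Fintype.card I := by linarith
    exact_mod_cast this
  obtain ⟨f⟩ : Nonempty (W ↪ I) := Function.Embedding.nonempty_of_card_le (ht ▸ hIcard)
  -- `F i j`: there is no edge between the blocks `i` and `j`.
  obtain ⟨F, hF⟩ : ∃ F : I → I → Prop, ∀ i j, F i j ↔ ∀ u ∈ P j.1, π u ∈ X i.1 :=
    ⟨fun i j => ∀ u ∈ P j.1, π u ∈ X i.1, fun _ _ => Iff.rfl⟩
  let HP : Finset (W × W) := Finset.univ.filter fun p : W × W => H.Adj p.1 p.2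
  -- The random injection of the vertices of `H` into the good blocks is `σ ∘ f`.
  obtain ⟨σ, hσ⟩ := exists_perm_pairs F (HP.map (f.prodMap f)) (by
    simp only [Finset.mem_map, HP, Finset.mem_filter, Finset.mem_univ, true_and]
    rintro _ ⟨p, hp, rfl⟩
    exact fun h => hp.ne (f.injective h))
  let E : Finset (W × W) := HP.filter fun p => F (σ (f p.1)) (σ (f p.2))
  have hEc : E.card ≤ t := by
    have e1 : ((HP.map (f.prodMap f)).filter fun p => F (σ p.1) (σ p.2)).card = E.card := by
      rw [Finset.filter_map, Finset.card_map]
      rfl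
    rw [e1, Finset.card_map] at hσ
    have e2 : (Finset.univ.filter fun p : I × I => p.1 ≠ p.2 ∧ F p.1 p.2).card ≤
        (Finset.univ.filter fun p : Fin M × Fin M => p.1 ≠ p.2 ∧
          ((X p.1).card : ℝ) ≤ p₂ ^ l * n ∧ ∀ u ∈ P p.2, π u ∈ X p.1).card := by
      refine Finset.card_le_card_of_injOn (fun p => (p.1.1, p.2.1)) ?_ ?_
      · rintro ⟨i, j⟩ hp
        simp only [Finset.coe_filter, Finset.mem_univ, true_and, Set.mem_ofPred_eq] at hp ⊢
        exact ⟨fun h => hp.1 (Subtype.ext h), i.2, (hF _ _).1 hp.2⟩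
      · rintro ⟨i, j⟩ _ ⟨i', j'⟩ _ h
        simp only [Prod.mk.injEq] at h
        exact Prod.ext (Subtype.ext h.1) (Subtype.ext h.2)
    have e3 : ((Finset.univ.filter fun p : I × I => p.1 ≠ p.2 ∧ F p.1 p.2).card : ℝ)
        ≤ 4 * c ^ l * (M : ℝ) ^ 2 := le_trans (by exact_mod_cast e2) h3
    set g := Fintype.card I with hg
    have e4 : (E.card : ℝ) * (g * (g - 1)) ≤ HP.card *
        (Finset.univ.filter fun p : I × I => p.1 ≠ p.2 ∧ F p.1 p.2).card := by
      have : ((g - 1 : ℕ) : ℝ) = g - 1 := by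
        rw [Nat.cast_sub (by omega)]; simp
      rw [← this]
      exact_mod_cast hσ
    have hgR : (t : ℝ) ≤ g := by exact_mod_cast hIcard
    have e5 : (E.card : ℝ) * (g * (g - 1)) ≤ t * (g * (g - 1)) := by
      refine e4.trans ((mul_le_mul_of_nonneg_left e3 (Nat.cast_nonneg _)).trans (hE.trans ?_))
      have : (0 : ℝ) ≤ t - 1 := by linarith
      gcongr
    have e6 : (0 : ℝ) < g * (g - 1) := by
      have : (0 : ℝ) < g - 1 := by linarith
      have : (0 : ℝ) < g := by linarith
      positivity
    exact_mod_cast le_of_mul_le_mul_right e5 e6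
  have hlink : LinkProp G (R₀.image π) (t * (2 * k) + t) := by
    refine LinkProp.of_few_nonadj G _ _ y (Nat.cast_nonneg _) (fun v => ?_) ?_
    · have : ((R₀.image π).filter fun r => ¬ G.Adj v r).card
          = (R₀.filter fun r => π r ∈ commonNonNbrs G {v}).card := by
        rw [Finset.filter_image, Finset.card_image_of_injective _ π.injective]
        simp [commonNonNbrs, G.adj_comm]
      rw [this]
      exact_mod_cast (h1 v).le
    · rw [Finset.card_image_of_injective _ π.injective, hR₀]
      exact_mod_cast hym
  have hcardA : ∀ i, ((P i).image π).card = l := fun i => by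
    rw [Finset.card_image_of_injective _ π.injective, hP]
  refine hasMinor_of_link G H (R₀.image π) (t * (2 * k) + t) k hlink
    (fun w => (P (σ (f w)).1).image π) (fun w => ?_) (fun w => ?_) ?_ (fun w => ?_) E ?_ ?_
  · rw [← Finset.card_pos, hcardA]; exact hl
  · rw [hcardA]; exact hlk
  · intro w w' hww
    rw [Finset.disjoint_image π.injective]
    exact hPdis fun h => hww (f.injective (σ.injective (Subtype.ext h)))
  · rw [Finset.disjoint_image π.injective]
    exact hPR _
  · intro w w' hww
    by_cases hFw : F (σ (f w)) (σ (f w'))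
    · right
      simp only [E, HP, Finset.mem_filter, Finset.mem_univ, true_and]
      exact ⟨hww, hFw⟩
    · left
      rw [hF] at hFw
      simp only [X, commonNonNbrs, Finset.mem_filter, Finset.mem_univ, true_and,
        Finset.mem_image, not_forall, not_not] at hFw
      obtain ⟨u, hu, a, ⟨x, hx, rfl⟩, hadj⟩ := hFw
      exact ⟨π x, Finset.mem_image_of_mem _ hx, π u, Finset.mem_image_of_mem _ hu, hadj.symm⟩
  · rw [← ht]; omega

/-! ### Choice of the constants -/

open Filter Topology in
/-- The logarithm is sublinear: the `2 * k + 1` reserve vertices needed per block of size `l` are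
a small proportion of `l`. -/
lemma eventually_bits (c : ℝ) (hc : 0 < c) :
    ∀ᶠ l : ℕ in atTop, ∃ k : ℕ, l < 2 ^ k ∧ (2 * k + 1 : ℝ) ≤ c * l := by
  have h1 : ∀ᶠ x : ℝ in atTop, ‖Real.log x‖ ≤ (c * Real.log 2 / 4) * ‖id x‖ :=
    Real.isLittleO_log_id_atTop.bound (by have := Real.log_pos one_lt_two; positivity)
  have h2 : ∀ᶠ x : ℝ in atTop, 3 ≤ c / 2 * x :=
    (tendsto_id.const_mul_atTop (by positivity : (0 : ℝ) < c / 2)).eventually_ge_atTop 3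
  filter_upwards [tendsto_natCast_atTop_atTop.eventually h1,
    tendsto_natCast_atTop_atTop.eventually h2] with l hl1 hl2
  refine ⟨Nat.log 2 l + 1, Nat.lt_pow_succ_log_self one_lt_two l, ?_⟩
  have h3 := Real.natLog_le_logb l 2
  have hlog : 0 < Real.log 2 := Real.log_pos one_lt_two
  have h4 : Real.log l ≤ (c * Real.log 2 / 4) * l := by
    have := (le_abs_self _).trans hl1
    simpa using this
  have h5 : Real.logb (2 : ℕ) l ≤ c / 4 * l := by
    rw [Real.logb, Nat.cast_ofNat, div_le_iff₀ hlog]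
    linarith
  have h6 : (3 : ℝ) ≤ c / 2 * l := hl2
  have h7 : (Nat.log 2 l : ℝ) ≤ c / 4 * l := h3.trans h5
  push_cast
  linarith

open Filter Topology in
lemma eventually_mul_pow (K θ : ℝ) (h0 : 0 ≤ θ) (h1 : θ < 1) :
    ∀ᶠ s : ℕ in atTop, K * (s + 1) * θ ^ s ≤ 1 / 4 := by
  have h : Tendsto (fun s : ℕ => K * ((s : ℝ) * θ ^ s + θ ^ s)) atTop (𝓝 (K * (0 + 0))) :=
    ((tendsto_self_mul_const_pow_of_lt_one h0 h1).add
      (tendsto_pow_atTop_nhds_zero_of_lt_one h0 h1)).const_mul K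
  simp only [add_zero, mul_zero] at h
  filter_upwards [h.eventually_le_const (by norm_num : (0 : ℝ) < 1 / 4)] with s hs
  linarith

open Filter Topology in
lemma eventually_pow_le (r a : ℝ) (h0 : 0 ≤ r) (h1 : r < 1) (ha : 0 < a) :
    ∀ᶠ s : ℕ in atTop, r ^ s ≤ a :=
  (tendsto_pow_atTop_nhds_zero_of_lt_one h0 h1).eventually_le_const ha

open Filter Topology in
set_option maxHeartbeats 1000000 in
/-- The theorem in terms of `p₀ = 1 - λ`, the proportion of non-neighbours of a vertex, and of
the number `d * t` of ordered adjacent pairs of `H`. Constants are chosen so that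
`p₀ < p₁ < p₂ < p₃ = p₀ + ε` and `p₀ < γ < 1 / 2`: `p₁` absorbs the positions already exposed,
`(p₁ / p₂) ^ l` pays for Markov's inequality, `(p₂ / p₃) ^ l` for the factors lost in the number
of failing pairs, and `γ` is the proportion of the reserve a vertex may miss. The reserve has
size about `ρ * n`, and its union bound over the `n` vertices uses subsets of size about
`κ * ρ * n`. -/
lemma hasMinor_of_large (p₀ ε : ℝ) (hp0 : 0 < p₀) (hp0' : p₀ < 1 / 2) (hε : 0 < ε)
    (hε1 : p₀ + ε < 1) :
    ∃ L T : ℕ, ∀ (V W : Type) [Fintype V] [Fintype W] (G : SimpleGraph V) (H : SimpleGraph W)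
      (l n t : ℕ) (d : ℝ), L ≤ l → T ≤ t → n = Fintype.card V → t = Fintype.card W →
      (1 + ε) * l * t ≤ n →
      (∀ v, ((commonNonNbrs G {v}).card : ℝ) ≤ p₀ * n) →
      (Nat.card {p : W × W // H.Adj p.1 p.2} : ℝ) = d * t → d * (p₀ + ε) ^ (l ^ 2) ≤ 1 →
      HasMinor G H := by
  obtain ⟨p₁, hp₁⟩ : ∃ p₁, p₁ = p₀ + ε / 3 := ⟨_, rfl⟩
  obtain ⟨p₂, hp₂⟩ : ∃ p₂, p₂ = p₀ + 2 * ε / 3 := ⟨_, rfl⟩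
  obtain ⟨p₃, hp₃⟩ : ∃ p₃, p₃ = p₀ + ε := ⟨_, rfl⟩
  obtain ⟨γ, hγ⟩ : ∃ γ, γ = p₀ / 2 + 1 / 4 := ⟨_, rfl⟩
  obtain ⟨κ, hκ⟩ : ∃ κ, κ = (γ - p₀) / 4 := ⟨_, rfl⟩
  obtain ⟨θ, hθ⟩ : ∃ θ, θ = 2 * p₀ / (γ + p₀) := ⟨_, rfl⟩
  obtain ⟨ρ, hρ⟩ : ∃ ρ, ρ = ε / 8 := ⟨_, rfl⟩
  obtain ⟨β, hβ⟩ : ∃ β, β = 1 / 2 - p₀ := ⟨_, rfl⟩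
  obtain ⟨K, hK⟩ : ∃ K, K = (1 / κ + 1) / ρ := ⟨_, rfl⟩
  have hp10 : 0 < p₁ := by linarith
  have hp20 : 0 < p₂ := by linarith
  have hp30 : 0 < p₃ := by linarith
  have hγ0 : 0 < γ := by linarith
  have hκ0 : 0 < κ := by linarith
  have hκ1 : κ < 1 := by linarith
  have hκγ : κ < γ := by linarith
  have hγ1 : γ < 1 := by linarith
  have hρ0 : 0 < ρ := by linarith
  have hβ0 : 0 < β := by linarith
  have hθ0 : 0 ≤ θ := by rw [hθ]; positivity
  have hθ1 : θ < 1 := by rw [hθ, div_lt_one (by linarith)]; linarith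
  have hK0 : 0 < K := by rw [hK]; positivity
  have hL : ∀ᶠ l : ℕ in atTop, (p₁ / p₂) ^ l ≤ ε / 8 / 4 ∧ (p₂ / p₃) ^ l ≤ 1 / 64 ∧
      (∃ k : ℕ, l < 2 ^ k ∧ (2 * k + 1 : ℝ) ≤ β * ρ / 4 * l) ∧ 1 ≤ l := by
    filter_upwards [eventually_pow_le (p₁ / p₂) (ε / 8 / 4) (by positivity)
        (by rw [div_lt_one hp20]; linarith) (by positivity),
      eventually_pow_le (p₂ / p₃) (1 / 64) (by positivity)
        (by rw [div_lt_one hp30]; linarith) (by positivity),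
      eventually_bits (β * ρ / 4) (by positivity), eventually_ge_atTop 1] with l h1 h2 h3 h4
    exact ⟨h1, h2, h3, h4⟩
  obtain ⟨L, hL⟩ := eventually_atTop.1 hL
  obtain ⟨S, hS⟩ := eventually_atTop.1 (eventually_mul_pow K θ hθ0 hθ1)
  have hT : ∀ᶠ t : ℕ in atTop, (4 / ε ≤ t ∧ 4 ≤ (t : ℝ)) ∧
      4 / (β * ρ) < t ∧ K * (S + 1) ≤ t := by
    have h := tendsto_natCast_atTop_atTop (R := ℝ)
    filter_upwards [h.eventually_ge_atTop (4 / ε), h.eventually_ge_atTop 4,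
      h.eventually_gt_atTop (4 / (β * ρ)), h.eventually_ge_atTop (K * (S + 1))] with t h1 h2 h3 h4
    exact ⟨⟨h1, h2⟩, h3, h4⟩
  obtain ⟨T, hT⟩ := eventually_atTop.1 hT
  refine ⟨L, T, fun V W _ _ G H l n t d hl ht hn htW hnlt hdeg hd hdp => ?_⟩
  obtain ⟨hl1, hl2, ⟨k, hk1, hk2⟩, hl4⟩ := hL l hl
  obtain ⟨⟨ht1, ht2⟩, ht3, ht4⟩ := hT t ht
  have hl4R : (1 : ℝ) ≤ l := by exact_mod_cast hl4
  have ht0 : (0 : ℝ) < t := by linarith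
  have hlt : (t : ℝ) ≤ l * t := le_mul_of_one_le_left ht0.le hl4R
  have hll : (l : ℝ) * 4 ≤ l * t := mul_le_mul_of_nonneg_left ht2 (by linarith)
  have hεlt : 0 ≤ ε * (l * t) := by positivity
  have hnlt' : (l : ℝ) * t ≤ n := by linarith
  have htn : (t : ℝ) ≤ n := by linarith
  have hnR : (0 : ℝ) < n := by linarith
  have hn4 : (4 : ℝ) * l ≤ n := by linarith
  rw [div_le_iff₀ hε] at ht1
  rw [div_lt_iff₀ (by positivity)] at ht3
  obtain ⟨m, hm⟩ : ∃ m, m = ⌊ρ * n⌋₊ := ⟨_, rfl⟩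
  have hm1 : (m : ℝ) ≤ ρ * n := by rw [hm]; exact Nat.floor_le (by positivity)
  have hm2 : ρ * n < m + 1 := by rw [hm]; exact Nat.lt_floor_add_one _
  obtain ⟨s, hs⟩ : ∃ s, s = ⌊κ * m⌋₊ := ⟨_, rfl⟩
  have hs1 : (s : ℝ) ≤ κ * m := by rw [hs]; exact Nat.floor_le (by positivity)
  have hs2 : κ * m < s + 1 := by rw [hs]; exact Nat.lt_floor_add_one _
  obtain ⟨y, hy⟩ : ∃ y, y = ⌈γ * m⌉₊ := ⟨_, rfl⟩
  have hy1 : γ * m ≤ y := by rw [hy]; exact Nat.le_ceil _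
  have hy2 : (y : ℝ) < γ * m + 1 := by rw [hy]; exact Nat.ceil_lt_add_one (by positivity)
  obtain ⟨M, hM⟩ : ∃ M, M = ⌈(1 + ε / 4) * t⌉₊ := ⟨_, rfl⟩
  have hM1 : (1 + ε / 4) * t ≤ M := by rw [hM]; exact Nat.le_ceil _
  have hM2 : (M : ℝ) < (1 + ε / 4) * t + 1 := by
    rw [hM]; exact Nat.ceil_lt_add_one (by positivity)
  have hM3 : (M : ℝ) ≤ (1 + ε / 2) * t := by linarith
  have hβρn : 4 < β * ρ * n := by
    have := mul_le_mul_of_nonneg_left htn (mul_pos hβ0 hρ0).le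
    linarith
  have hβ1 : β < 1 := by linarith
  have hρn : 4 < ρ * n := by
    have := mul_le_mul_of_nonneg_right hβ1.le (mul_pos hρ0 hnR).le
    linarith
  have hm0 : (0 : ℝ) < m := by linarith
  have hρ1 : ρ < 1 := by linarith
  have hmn : (m : ℝ) ≤ n := by
    have := mul_le_mul_of_nonneg_right hρ1.le hnR.le
    linarith
  have hsn : (s : ℝ) ≤ κ * n := hs1.trans (mul_le_mul_of_nonneg_left hmn hκ0.le)
  have hnK : (n : ℝ) ≤ K * (s + 1) := by
    rw [hK, div_mul_eq_mul_div, le_div_iff₀ hρ0]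
    have : (m : ℝ) ≤ 1 / κ * (s + 1) := by
      rw [one_div, inv_mul_eq_div, le_div_iff₀ hκ0]; linarith
    have : (0 : ℝ) ≤ s := Nat.cast_nonneg _
    linarith
  have hsS : S ≤ s := by
    have h1 : K * (S + 1) ≤ K * ((s : ℝ) + 1) := by linarith
    have h2 := le_of_mul_le_mul_left h1 hK0
    have h3 : (S : ℝ) ≤ s := by linarith
    exact_mod_cast h3
  -- Room for the reserve and all blocks: `(1 + ε / 2) ≤ (1 - ε / 8) * (1 + ε)` as `ε < 1`.
  have hmM : m + M * l ≤ n := by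
    have h1 : (M : ℝ) * l ≤ (1 + ε / 2) * t * l := by gcongr
    have h2 : (1 + ε / 2) * ((t : ℝ) * l) ≤ (1 - ρ) * ((1 + ε) * l * t) := by
      have h3 : (1 + ε / 2) ≤ (1 - ρ) * (1 + ε) := by
        have : ε * ε ≤ ε * 1 := by gcongr; linarith
        rw [hρ]; linarith
      have h4 : (0 : ℝ) ≤ t * l := by positivity
      have := mul_le_mul_of_nonneg_right h3 h4
      linarith
    have h3 : (1 - ρ) * ((1 + ε) * l * t) ≤ (1 - ρ) * n :=
      mul_le_mul_of_nonneg_left hnlt (by linarith)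
    have h4 : (m : ℝ) + M * l ≤ n := by linarith
    exact_mod_cast h4
  refine hasMinor_core G H n t s y l m M k hn htW hmM p₀ p₁ p₂ (p₀ / (1 - κ)) θ (ε / 8)
    (2 * p₂ ^ l) ?_ ?_ hl4 hk1 hdeg ?_ ?_ ?_ ?_ ?_ hp10.le hp20 ?_ (by positivity) ?_
    (by positivity) ?_ ?_ ?_ ?_
  · exact_mod_cast hnR
  · have : (2 : ℝ) ≤ t := by linarith
    exact_mod_cast this
  · have : 0 < 1 - κ := by linarith
    positivity
  · have : 0 < 1 - κ := by linarith
    rw [div_mul_eq_mul_div, le_div_iff₀ this]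
    have := mul_le_mul_of_nonneg_left hsn hp0.le
    linarith
  · have : (s : ℝ) < y := by
      have := mul_lt_mul_of_pos_right hκγ hm0
      linarith
    exact_mod_cast this
  · have h1 : 0 < 1 - κ := by linarith
    have h2 : (γ - κ) * m ≤ (y : ℝ) - s := by linarith
    have h3 : p₀ / (1 - κ) ≤ θ * (γ - κ) := by
      rw [hθ, div_mul_eq_mul_div, div_le_div_iff₀ h1 (by linarith)]
      have h4 : γ + p₀ ≤ 2 * ((γ - κ) * (1 - κ)) := by
        have h5 : (γ - κ) * κ ≤ 1 * κ := by gcongr; linarith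
        linarith
      have := mul_le_mul_of_nonneg_left h4 hp0.le
      linarith
    calc _ ≤ θ * (γ - κ) * m := by gcongr
      _ = θ * ((γ - κ) * m) := by ring
      _ ≤ _ := by gcongr
  · calc (n : ℝ) * θ ^ s ≤ K * (s + 1) * θ ^ s := by gcongr
      _ ≤ _ := hS s hsS
  · have h1 : (4 : ℝ) * l ≤ ε * n := by
      have h2 := mul_le_mul_of_nonneg_left ht1 (by linarith : (0 : ℝ) ≤ l)
      have h3 := mul_le_mul_of_nonneg_left hnlt' hε.le
      linarith
    have h2 : p₁ * l ≤ 1 * l := by gcongr; linarith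
    have h3 : p₁ * n = p₀ * n + ε / 3 * n := by rw [hp₁]; ring
    linarith
  · rw [div_pow, div_le_iff₀ (by positivity)] at hl1
    exact hl1
  · have := mul_le_mul_of_nonneg_left hn4 (by positivity : 0 ≤ p₂ ^ l)
    linarith
  · have h1 : 1 ≤ (1 - ε / 8) * (1 + ε / 4) := by
      have : ε * ε ≤ ε * 1 := by gcongr; linarith
      linarith
    calc (t : ℝ) = 1 * t := (one_mul _).symm
      _ ≤ (1 - ε / 8) * (1 + ε / 4) * t := by gcongr
      _ = (1 - ε / 8) * ((1 + ε / 4) * t) := by ring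
      _ ≤ (1 - ε / 8) * M := mul_le_mul_of_nonneg_left hM1 (by linarith)
  · have h1 : (t : ℝ) * (2 * k + 1) ≤ β * ρ / 4 * n := by
      calc (t : ℝ) * (2 * k + 1) ≤ t * (β * ρ / 4 * l) := by gcongr
        _ = β * ρ / 4 * (l * t) := by ring
        _ ≤ _ := by gcongr
    have h2 : β * (ρ * n) ≤ β * (m + 1) := by gcongr
    have h3 : (2 * y + (t * (2 * k) + t) : ℝ) < m := by
      have h4 : 2 * (γ * m) = m - β * m := by rw [hγ, hβ]; ring
      linarith
    exact_mod_cast h3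
  · classical
    have hcard : ((Finset.univ.filter fun p : W × W => H.Adj p.1 p.2).card : ℝ) = d * t := by
      rw [← hd, Nat.card_eq_fintype_card, Fintype.card_subtype]
    have h1 : 0 ≤ d * t := by rw [← hd]; positivity
    have hd0 : 0 ≤ d := nonneg_of_mul_nonneg_left h1 ht0
    have h2 : 2 * (p₂ / p₃) ^ l ≤ 1 / 32 := by linarith
    have h3 : (2 * (p₂ / p₃) ^ l) ^ l ≤ 1 / 32 := by
      calc (2 * (p₂ / p₃) ^ l) ^ l ≤ (1 / 32 : ℝ) ^ l := by gcongr
        _ ≤ (1 / 32) ^ 1 := pow_le_pow_of_le_one (by norm_num) (by norm_num) hl4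
        _ = 1 / 32 := pow_one _
    have h4 : d * (2 * p₂ ^ l) ^ l ≤ 1 / 32 := by
      have h5 : (2 * p₂ ^ l) ^ l = (2 * (p₂ / p₃) ^ l) ^ l * p₃ ^ (l ^ 2) := by
        rw [pow_two, pow_mul, ← mul_pow, mul_assoc, ← mul_pow, div_mul_cancel₀ _ hp30.ne']
      rw [h5]
      rw [← hp₃] at hdp
      calc d * ((2 * (p₂ / p₃) ^ l) ^ l * p₃ ^ (l ^ 2))
          = (2 * (p₂ / p₃) ^ l) ^ l * (d * p₃ ^ (l ^ 2)) := by ring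
        _ ≤ 1 / 32 * 1 := by gcongr
        _ = _ := by ring
    have h6 : (M : ℝ) ≤ 2 * t := by
      have : (1 + ε / 2) * (t : ℝ) ≤ 2 * t := by gcongr; linarith
      linarith
    rw [hcard]
    calc d * t * (4 * (2 * p₂ ^ l) ^ l * (M : ℝ) ^ 2)
        = (d * (2 * p₂ ^ l) ^ l) * (4 * (t : ℝ) * (M : ℝ) ^ 2) := by ring
      _ ≤ 1 / 32 * (4 * (t : ℝ) * (2 * t) ^ 2) := by gcongr
      _ = (t : ℝ) * (t * (t / 2)) := by ring
      _ ≤ (t : ℝ) * (t * (t - 1)) := by gcongr; linarith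

/-! ### Average degree and minimum degree -/

/-- Each edge of `H` gives two ordered adjacent pairs. -/
lemma card_adj_pairs {W : Type*} [Fintype W] (H : SimpleGraph W) :
    Nat.card {p : W × W // H.Adj p.1 p.2} = 2 * Nat.card H.edgeSet := by
  classical
  have e : {p : W × W // H.Adj p.1 p.2} ≃ H.Dart :=
    { toFun := fun p => ⟨p.1, p.2⟩
      invFun := fun a => ⟨a.toProd, a.adj⟩
      left_inv := fun _ => rfl
      right_inv := fun _ => rfl }
  rw [Nat.card_congr e, Nat.card_eq_fintype_card, H.dart_card_eq_twice_card_edges,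
    Nat.card_eq_fintype_card, SimpleGraph.edgeFinset_card]

lemma card_commonNonNbrs_singleton {V : Type*} [Fintype V] (G : SimpleGraph V) (v : V) :
    (commonNonNbrs G {v}).card + Nat.card (G.neighborSet v) = Fintype.card V := by
  classical
  have h1 : commonNonNbrs G {v} = (Finset.univ.filter fun u => G.Adj v u)ᶜ := by
    ext u
    simp [commonNonNbrs, G.adj_comm]
  have h2 : Nat.card (G.neighborSet v) = (Finset.univ.filter fun u => G.Adj v u).card := by
    rw [Nat.card_eq_fintype_card, ← Fintype.card_subtype]
    rfl
  rw [h1, h2, Finset.card_compl]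
  exact Nat.sub_add_cancel (Finset.card_le_univ _)

/-- For all reals `λ ∈ (1/2, 1)` and `ε ∈ (0, λ)` there exists `d₀` such
that, with `b := (1 − λ + ε)⁻¹`: for every graph `H` with `t` vertices and average
degree `d ≥ d₀`, every graph `G` with `n ≥ (1 + ε)·⌈√(log_b d)⌉·t` vertices and
minimum degree at least `λ·n` contains `H` as a minor. -/
theorem statement7 (lam ε : ℝ) (hlam1 : 1 / 2 < lam) (hlam2 : lam < 1)
    (hε1 : 0 < ε) (hε2 : ε < lam) :
    ∃ d₀ : ℝ, ∀ (W : Type) [Fintype W], ∀ H : SimpleGraph W,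
      d₀ ≤ avgDeg H →
      ∀ (V : Type) [Fintype V], ∀ G : SimpleGraph V,
        (1 + ε) * (⌈Real.sqrt (Real.logb (1 - lam + ε)⁻¹ (avgDeg H))⌉ : ℝ) * Fintype.card W
            ≤ (Fintype.card V : ℝ) →
        (∀ v, lam * Fintype.card V ≤ Nat.card (G.neighborSet v)) →
        HasMinor G H := by
  set q : ℝ := 1 - lam + ε with hq
  have hq0 : 0 < q := by linarith
  have hq1 : q < 1 := by linarith
  have hb1 : 1 < q⁻¹ := (one_lt_inv₀ hq0).2 hq1
  obtain ⟨L, T, hmain⟩ := hasMinor_of_large (1 - lam) ε (by linarith) (by linarith) hε1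
    (by linarith)
  refine ⟨max 1 (max T (q⁻¹ ^ (L ^ 2))), fun W _ H hd V _ G hn hG => ?_⟩
  obtain ⟨hd1, hd2⟩ := max_le_iff.1 hd
  obtain ⟨hdT, hdL⟩ := max_le_iff.1 hd2
  have hd0 : 0 < avgDeg H := by linarith
  -- An empty `H` has average degree `0 / 0 = 0`, which is below the threshold.
  have ht0 : 0 < Nat.card W := by
    rcases Nat.eq_zero_or_pos (Nat.card W) with h | h
    · rw [avgDeg, h, Nat.cast_zero, div_zero] at hd0
      exact absurd hd0 (lt_irrefl _)
    · exact h
  rw [Nat.card_eq_fintype_card] at ht0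
  have ht0' : (0 : ℝ) < Fintype.card W := by exact_mod_cast ht0
  have hpairs : (Nat.card {p : W × W // H.Adj p.1 p.2} : ℝ) = avgDeg H * Fintype.card W := by
    rw [card_adj_pairs, avgDeg, Nat.card_eq_fintype_card (α := W), div_mul_cancel₀ _ ht0'.ne']
    push_cast
    ring
  have hdt : avgDeg H ≤ Fintype.card W := by
    have h1 : Nat.card {p : W × W // H.Adj p.1 p.2} ≤ Fintype.card W * Fintype.card W := by
      rw [← Fintype.card_prod, ← Nat.card_eq_fintype_card]
      exact Nat.card_le_card_of_injective _ Subtype.val_injective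
    have h2 : avgDeg H * Fintype.card W ≤ (Fintype.card W : ℝ) * Fintype.card W := by
      rw [← hpairs]
      exact_mod_cast h1
    exact le_of_mul_le_mul_right h2 ht0'
  obtain ⟨l, hl⟩ := Int.eq_ofNat_of_zero_le
    (Int.ceil_nonneg (Real.sqrt_nonneg (Real.logb q⁻¹ (avgDeg H))))
  have hsl : Real.sqrt (Real.logb q⁻¹ (avgDeg H)) ≤ l := by
    have := Int.le_ceil (Real.sqrt (Real.logb q⁻¹ (avgDeg H)))
    rw [hl] at this
    exact_mod_cast this
  rw [hl] at hn
  refine hmain V W G H l _ _ (avgDeg H) ?_ ?_ rfl rfl (by exact_mod_cast hn) (fun v => ?_)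
    hpairs ?_
  · have h1 : (L : ℝ) ≤ Real.sqrt (Real.logb q⁻¹ (avgDeg H)) := by
      apply Real.le_sqrt_of_sq_le
      rw [Real.le_logb_iff_rpow_le hb1 hd0]
      exact_mod_cast hdL
    exact_mod_cast h1.trans hsl
  · exact_mod_cast hdT.trans hdt
  · have h1 := card_commonNonNbrs_singleton G v
    have h2 : ((commonNonNbrs G {v}).card : ℝ) + Nat.card (G.neighborSet v)
        = Fintype.card V := by exact_mod_cast h1
    have h3 := hG v
    linarith
  · have h1 : Real.logb q⁻¹ (avgDeg H) ≤ (l ^ 2 : ℕ) := by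
      push_cast
      exact (Real.sqrt_le_left (Nat.cast_nonneg l)).1 hsl
    rw [Real.logb_le_iff_le_rpow hb1 hd0, Real.rpow_natCast, inv_pow] at h1
    rwa [← hq, ← le_div_iff₀ (by positivity), one_div]
end
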